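/- arXiv:1912.11192 — 5 statements merged into one kernel-verified Lean document; each statement's English description precedes it below -/
import Mathlib

section
/- Let r ≥ 0 and 0 ≤ s₁ < 3/2 + r < s₂. There exists a constant c > 0 depending only on s₁, s₂ and r such that for every a : ℤ³ ∖ {0} → ℂ with ‖a‖_{s₁} < ∞ and ‖a‖_{s₂} < ∞, one has ∑_{k ∈ ℤ³, k ≠ 0} |k|^r |a_k| ≤ c · ‖a‖_{s₁}^((s₂ − r − 3/2)/(s₂ − s₁)) · ‖a‖_{s₂}^((3/2 + r − s₁)/(s₂ − s₁)). -/
open scoped BigOperators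

/-- Euclidean norm of a lattice point `k ∈ ℤ³`. -/
noncomputable def wt (k : Fin 3 → ℤ) : ℝ := Real.sqrt (∑ i, ((k i : ℝ)) ^ 2)

/-- Summand of the squared Sobolev–Gevrey norm: `|k|^{2s} e^{2α|k|} |a_k|²`. -/
noncomputable def gterm (s α : ℝ) (a : (Fin 3 → ℤ) → ℂ) (k : Fin 3 → ℤ) : ℝ :=
  wt k ^ (2 * s) * Real.exp (2 * α * wt k) * ‖a k‖ ^ 2

/-- Sobolev–Gevrey norm `‖a‖_{s,α}`, the sum ranging over `k ∈ ℤ³ ∖ {0}`. -/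
noncomputable def gnorm (s α : ℝ) (a : (Fin 3 → ℤ) → ℂ) : ℝ :=
  Real.sqrt (∑' k : {k : Fin 3 → ℤ // k ≠ 0}, gterm s α a k.1)


abbrev KZ := {k : Fin 3 → ℤ // k ≠ 0}

lemma wt_one_le (k : KZ) : 1 ≤ wt k.1 := by
  obtain ⟨k, hk⟩ := k
  obtain ⟨i, hi⟩ := Function.ne_iff.mp hk
  have h1 : (1 : ℤ) ≤ (k i) ^ 2 := by
    have : k i ≠ 0 := hi
    have := sq_pos_of_ne_zero this
    omega
  have h2 : (1 : ℝ) ≤ (k i : ℝ) ^ 2 := by exact_mod_cast h1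
  unfold wt
  apply Real.one_le_sqrt.mpr
  exact h2.trans (Finset.single_le_sum (f := fun i => (k i : ℝ) ^ 2)
    (fun i _ => sq_nonneg _) (Finset.mem_univ i))

lemma abs_le_wt (k : Fin 3 → ℤ) (i : Fin 3) : |(k i : ℝ)| ≤ wt k := by
  unfold wt
  apply Real.abs_le_sqrt
  exact Finset.single_le_sum (f := fun i => (k i : ℝ) ^ 2)
    (fun i _ => sq_nonneg _) (Finset.mem_univ i)

lemma card_bound (F : Finset KZ) (R : ℝ) (hR : 0 ≤ R) (hF : ∀ k ∈ F, wt k.1 ≤ R) :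
    (F.card : ℝ) ≤ 27 * R ^ 3 := by
  rcases F.eq_empty_or_nonempty with rfl | ⟨k0, hk0⟩
  · simp; positivity
  have hR1 : 1 ≤ R := (wt_one_le k0).trans (hF k0 hk0)
  have hsub : F.map (Function.Embedding.subtype _) ⊆
      Fintype.piFinset (fun _ : Fin 3 => Finset.Icc (-⌊R⌋) ⌊R⌋) := by
    intro k hk
    simp only [Finset.mem_map, Function.Embedding.subtype_apply] at hk
    obtain ⟨k', hk', rfl⟩ := hk
    rw [Fintype.mem_piFinset]
    intro i
    have h := (abs_le_wt k'.1 i).trans (hF k' hk')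
    rw [abs_le] at h
    rw [Finset.mem_Icc]
    constructor
    · have : -(k'.1 i) ≤ ⌊R⌋ := Int.le_floor.mpr (by push_cast; linarith)
      omega
    · exact Int.le_floor.mpr h.2
  have hc := Finset.card_le_card hsub
  rw [Finset.card_map, Fintype.card_piFinset] at hc
  simp only [Int.card_Icc, Finset.prod_const, Finset.card_univ, Fintype.card_fin] at hc
  have hfl : 0 ≤ ⌊R⌋ := Int.floor_nonneg.mpr hR
  have h4 : (((⌊R⌋ + 1 - -⌊R⌋).toNat : ℕ) : ℝ) ≤ 3 * R := by
    have : (((⌊R⌋ + 1 - -⌊R⌋).toNat : ℕ) : ℤ) = 2 * ⌊R⌋ + 1 := by omega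
    have h5 : (((⌊R⌋ + 1 - -⌊R⌋).toNat : ℕ) : ℝ) = 2 * (⌊R⌋ : ℝ) + 1 := by exact_mod_cast this
    rw [h5]
    have := Int.floor_le R
    linarith
  calc (F.card : ℝ) ≤ (((⌊R⌋ + 1 - -⌊R⌋).toNat : ℕ) : ℝ) ^ 3 := by exact_mod_cast hc
    _ ≤ (3 * R) ^ 3 := by gcongr
    _ = 27 * R ^ 3 := by ring

lemma summable_int_geom (m : ℝ) (hm : 0 < m) :
    Summable (fun j : ℤ => (2 : ℝ) ^ (-(m * |(j : ℝ)|))) := by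
  have hg : Summable (fun n : ℕ => (2 : ℝ) ^ (-(m * (n : ℝ)))) := by
    have : (fun n : ℕ => (2 : ℝ) ^ (-(m * (n : ℝ)))) = fun n : ℕ => ((2 : ℝ) ^ (-m)) ^ n := by
      funext n
      rw [← Real.rpow_natCast, ← Real.rpow_mul (by norm_num)]
      congr 1; ring
    rw [this]
    exact summable_geometric_of_lt_one (by positivity)
      (Real.rpow_lt_one_of_one_lt_of_neg (by norm_num) (by linarith))
  apply Summable.of_nat_of_neg
  · simpa using hg
  · simpa using hg

lemma rpow_shell (e t : ℝ) (j : ℤ) (h1 : (2 : ℝ) ^ (j : ℝ) ≤ t) (h2 : t ≤ (2 : ℝ) ^ ((j : ℝ) + 1)) :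
    t ^ e ≤ 2 ^ |e| * 2 ^ ((j : ℝ) * e) := by
  have hp : (0 : ℝ) < 2 ^ (j : ℝ) := by positivity
  have ht : 0 < t := hp.trans_le h1
  rcases le_total 0 e with he | he
  · calc t ^ e ≤ ((2 : ℝ) ^ ((j : ℝ) + 1)) ^ e := Real.rpow_le_rpow ht.le h2 he
      _ = 2 ^ |e| * 2 ^ ((j : ℝ) * e) := by
        rw [← Real.rpow_mul (by norm_num), ← Real.rpow_add (by norm_num), abs_of_nonneg he]
        congr 1; ring
  · calc t ^ e ≤ ((2 : ℝ) ^ (j : ℝ)) ^ e := Real.rpow_le_rpow_of_nonpos hp h1 he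
      _ = 2 ^ ((j : ℝ) * e) := by rw [← Real.rpow_mul (by norm_num)]
      _ ≤ _ := le_mul_of_one_le_left (by positivity)
        (Real.one_le_rpow (by norm_num) (abs_nonneg _))

lemma lattice_sum (p q : ℝ) (hp : 0 < p) (hq : 0 < q) :
    ∃ C : ℝ, 0 < C ∧ ∀ κ : ℝ, 0 < κ → ∀ F : Finset KZ,
      ∑ k ∈ F, (wt k.1 / κ) ^ (p - 3) / (1 + (wt k.1 / κ) ^ (p + q)) ≤ C * κ ^ 3 := by
  set m := min p q with hm
  have hm0 : 0 < m := lt_min hp hq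
  have hs := summable_int_geom m hm0
  set A : ℝ := 2 ^ |p - 3| + 2 ^ |-3 - q| with hA
  have hA0 : 0 < A := by positivity
  set T : ℝ := ∑' j : ℤ, (2 : ℝ) ^ (-(m * |(j : ℝ)|)) with hT
  have hT0 : 0 < T := hs.tsum_pos (fun j => by positivity) 0 (by positivity)
  refine ⟨216 * A * T, by positivity, ?_⟩
  intro κ hκ F
  let J : KZ → ℤ := fun k => ⌊Real.logb 2 (wt k.1 / κ)⌋
  have ht : ∀ k : KZ, 0 < wt k.1 / κ := fun k =>
    div_pos (lt_of_lt_of_le one_pos (wt_one_le k)) hκ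
  have hJ1 : ∀ k, (2 : ℝ) ^ (J k : ℝ) ≤ wt k.1 / κ := fun k => by
    rw [← Real.le_logb_iff_rpow_le (by norm_num) (ht k)]
    exact Int.floor_le _
  have hJ2 : ∀ k, wt k.1 / κ ≤ (2 : ℝ) ^ ((J k : ℝ) + 1) := fun k => by
    rw [← Real.logb_le_iff_le_rpow (by norm_num) (ht k)]
    exact (Int.lt_floor_add_one _).le
  have hw : ∀ k : KZ, (wt k.1 / κ) ^ (p - 3) / (1 + (wt k.1 / κ) ^ (p + q)) ≤
      A * (2 ^ (-(m * |(J k : ℝ)|)) * 2 ^ (-(3 * (J k : ℝ)))) := by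
    intro k
    have htk := ht k
    have e1 := rpow_shell (p - 3) _ _ (hJ1 k) (hJ2 k)
    have e2 := rpow_shell (-3 - q) _ _ (hJ1 k) (hJ2 k)
    rcases le_total 0 (J k : ℝ) with hj | hj
    · calc (wt k.1 / κ) ^ (p - 3) / (1 + (wt k.1 / κ) ^ (p + q))
          ≤ (wt k.1 / κ) ^ (p - 3) / ((wt k.1 / κ) ^ (p + q)) := by
            gcongr; linarith
        _ = (wt k.1 / κ) ^ (-3 - q) := by
            rw [← Real.rpow_sub htk]; congr 1; ring
        _ ≤ _ := e2
        _ ≤ A * (2 ^ (-(m * |(J k : ℝ)|)) * 2 ^ (-(3 * (J k : ℝ)))) := by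
            rw [← Real.rpow_add (by norm_num) (-(m * |(J k : ℝ)|))]
            apply mul_le_mul _ _ (by positivity) hA0.le
            · rw [hA]; exact le_add_of_nonneg_left (by positivity)
            · apply Real.rpow_le_rpow_of_exponent_le (by norm_num)
              rw [abs_of_nonneg hj]
              have : m * (J k : ℝ) ≤ q * (J k : ℝ) := by gcongr; exact min_le_right _ _
              linarith
    · calc (wt k.1 / κ) ^ (p - 3) / (1 + (wt k.1 / κ) ^ (p + q))
          ≤ (wt k.1 / κ) ^ (p - 3) := by
            apply div_le_self (by positivity)
            have : 0 < (wt k.1 / κ) ^ (p + q) := by positivity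
            linarith
        _ ≤ _ := e1
        _ ≤ A * (2 ^ (-(m * |(J k : ℝ)|)) * 2 ^ (-(3 * (J k : ℝ)))) := by
            rw [← Real.rpow_add (by norm_num) (-(m * |(J k : ℝ)|))]
            apply mul_le_mul _ _ (by positivity) hA0.le
            · rw [hA]; exact le_add_of_nonneg_right (by positivity)
            · apply Real.rpow_le_rpow_of_exponent_le (by norm_num)
              rw [abs_of_nonpos hj]
              have : m * -(J k : ℝ) ≤ p * -(J k : ℝ) := by
                apply mul_le_mul_of_nonneg_right (min_le_left _ _); linarith
              linarith
  calc ∑ k ∈ F, (wt k.1 / κ) ^ (p - 3) / (1 + (wt k.1 / κ) ^ (p + q))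
      ≤ ∑ k ∈ F, A * (2 ^ (-(m * |(J k : ℝ)|)) * 2 ^ (-(3 * (J k : ℝ)))) :=
        Finset.sum_le_sum fun k _ => hw k
    _ = ∑ j ∈ F.image J, ∑ k ∈ F with J k = j,
          A * (2 ^ (-(m * |(J k : ℝ)|)) * 2 ^ (-(3 * (J k : ℝ)))) :=
        (Finset.sum_fiberwise_of_maps_to (fun k hk => Finset.mem_image_of_mem J hk) _).symm
    _ ≤ ∑ j ∈ F.image J, 216 * A * κ ^ 3 * 2 ^ (-(m * |(j : ℝ)|)) := by
        apply Finset.sum_le_sum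
        intro j _
        have hc := card_bound (F.filter (fun k => J k = j)) (κ * 2 ^ ((j : ℝ) + 1))
          (by positivity) (by
            intro k hk
            have hk' := (Finset.mem_filter.mp hk).2
            have := hJ2 k
            rw [hk', div_le_iff₀ hκ] at this
            linarith)
        have hcst : ∑ k ∈ F with J k = j,
            A * ((2 : ℝ) ^ (-(m * |(J k : ℝ)|)) * 2 ^ (-(3 * (J k : ℝ)))) =
            ((F.filter (fun k => J k = j)).card : ℝ) *
              (A * (2 ^ (-(m * |(j : ℝ)|)) * 2 ^ (-(3 * (j : ℝ))))) := by
          rw [← nsmul_eq_mul, ← Finset.sum_const]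
          apply Finset.sum_congr rfl
          intro k hk
          rw [(Finset.mem_filter.mp hk).2]
        rw [hcst]
        have h8 : ((2 : ℝ) ^ ((j : ℝ) + 1)) ^ 3 * 2 ^ (-(3 * (j : ℝ))) = 8 := by
          rw [← Real.rpow_natCast, ← Real.rpow_mul (by norm_num), ← Real.rpow_add (by norm_num)]
          have : ((j : ℝ) + 1) * ((3 : ℕ) : ℝ) + -(3 * (j : ℝ)) = ((3 : ℕ) : ℝ) := by
            push_cast; ring
          rw [this, Real.rpow_natCast]; norm_num
        calc _ ≤ (27 * (κ * 2 ^ ((j : ℝ) + 1)) ^ 3) *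
              (A * (2 ^ (-(m * |(j : ℝ)|)) * 2 ^ (-(3 * (j : ℝ))))) := by gcongr
          _ = 27 * κ ^ 3 * A * 2 ^ (-(m * |(j : ℝ)|)) *
              (((2 : ℝ) ^ ((j : ℝ) + 1)) ^ 3 * 2 ^ (-(3 * (j : ℝ)))) := by ring
          _ = _ := by rw [h8]; ring
          _ ≤ _ := le_refl _
    _ = 216 * A * κ ^ 3 * ∑ j ∈ F.image J, 2 ^ (-(m * |(j : ℝ)|)) := by rw [Finset.mul_sum]
    _ ≤ 216 * A * κ ^ 3 * T := by
        gcongr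
        exact hs.sum_le_tsum _ (fun j _ => by positivity)
    _ = 216 * A * T * κ ^ 3 := by ring

lemma gterm_nonneg (s : ℝ) (a : (Fin 3 → ℤ) → ℂ) (k : Fin 3 → ℤ) : 0 ≤ gterm s 0 a k := by
  have : 0 ≤ wt k := Real.sqrt_nonneg _
  unfold gterm; positivity

lemma gnorm_sq (s : ℝ) (a : (Fin 3 → ℤ) → ℂ) :
    gnorm s 0 a ^ 2 = ∑' k : KZ, gterm s 0 a k.1 :=
  Real.sq_sqrt (tsum_nonneg fun k => gterm_nonneg s a k.1)

lemma gnorm_pos (s : ℝ) (a : (Fin 3 → ℤ) → ℂ) (hs : Summable (fun k : KZ => gterm s 0 a k.1))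
    (k : KZ) (hk : a k.1 ≠ 0) : 0 < gnorm s 0 a := by
  apply Real.sqrt_pos.mpr
  refine hs.tsum_pos (fun k => gterm_nonneg s a k.1) k ?_
  have := lt_of_lt_of_le one_pos (wt_one_le k)
  unfold gterm; positivity

/-- interpolation estimate
`∑_{k≠0} |k|^r |a_k| ≤ c ‖a‖_{s₁}^{(s₂−r−3/2)/(s₂−s₁)} ‖a‖_{s₂}^{(3/2+r−s₁)/(s₂−s₁)}`
for `0 ≤ s₁ < 3/2 + r < s₂`. -/
theorem stmt1 (r s₁ s₂ : ℝ) (hr : 0 ≤ r) (h1 : 0 ≤ s₁) (h2 : s₁ < 3 / 2 + r)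
    (h3 : 3 / 2 + r < s₂) :
    ∃ c : ℝ, 0 < c ∧ ∀ a : (Fin 3 → ℤ) → ℂ,
      Summable (fun k : {k : Fin 3 → ℤ // k ≠ 0} => gterm s₁ 0 a k.1) →
      Summable (fun k : {k : Fin 3 → ℤ // k ≠ 0} => gterm s₂ 0 a k.1) →
      Summable (fun k : {k : Fin 3 → ℤ // k ≠ 0} => wt k.1 ^ r * ‖a k.1‖) ∧
      (∑' k : {k : Fin 3 → ℤ // k ≠ 0}, wt k.1 ^ r * ‖a k.1‖) ≤
        c * gnorm s₁ 0 a ^ ((s₂ - r - 3 / 2) / (s₂ - s₁))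
          * gnorm s₂ 0 a ^ ((3 / 2 + r - s₁) / (s₂ - s₁)) := by
  set p : ℝ := 3 + 2 * r - 2 * s₁ with hp
  set q : ℝ := 2 * s₂ - 2 * r - 3 with hq
  have hp0 : 0 < p := by rw [hp]; linarith
  have hq0 : 0 < q := by rw [hq]; linarith
  have hδ : 0 < s₂ - s₁ := by linarith
  obtain ⟨C, hC, hL⟩ := lattice_sum p q hp0 hq0
  refine ⟨Real.sqrt (2 * C), by positivity, ?_⟩
  intro a hs1 hs2
  by_cases hz : ∀ k : KZ, a k.1 = 0
  · have hf : (fun k : KZ => wt k.1 ^ r * ‖a k.1‖) = fun _ => 0 := by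
      funext k; simp [hz k]
    have g1 : 0 ≤ gnorm s₁ 0 a := Real.sqrt_nonneg _
    have g2 : 0 ≤ gnorm s₂ 0 a := Real.sqrt_nonneg _
    change Summable (fun k : KZ => wt k.1 ^ r * ‖a k.1‖) ∧
      (∑' k : KZ, wt k.1 ^ r * ‖a k.1‖) ≤ _
    rw [hf]
    refine ⟨summable_zero, ?_⟩
    rw [tsum_zero]
    positivity
  push Not at hz
  obtain ⟨k0, hk0⟩ := hz
  have hN1 := gnorm_pos s₁ a hs1 k0 hk0
  have hN2 := gnorm_pos s₂ a hs2 k0 hk0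
  have hq1 := gnorm_sq s₁ a
  have hq2 := gnorm_sq s₂ a
  set N1 := gnorm s₁ 0 a with hN1d
  set N2 := gnorm s₂ 0 a with hN2d
  have hw0 : ∀ k : KZ, 0 < wt k.1 := fun k => lt_of_lt_of_le one_pos (wt_one_le k)
  set κ : ℝ := (N2 / N1) ^ (1 / (s₂ - s₁)) with hκ
  have hκ0 : 0 < κ := by positivity
  have hκp : ∀ x : ℝ, κ ^ x = (N2 / N1) ^ (x / (s₂ - s₁)) := fun x => by
    rw [hκ, ← Real.rpow_mul (by positivity)]; congr 1; ring
  have hκ2 : κ ^ (2 * r - 2 * s₂) * N2 ^ 2 = κ ^ (2 * r - 2 * s₁) * N1 ^ 2 := by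
    have e1 : κ ^ (2 * (s₂ - s₁)) = (N2 / N1) ^ 2 := by
      rw [hκp, mul_div_assoc, div_self hδ.ne', mul_one]
      exact Real.rpow_two _
    have e2 : κ ^ (2 * r - 2 * s₁) = κ ^ (2 * r - 2 * s₂) * κ ^ (2 * (s₂ - s₁)) := by
      rw [← Real.rpow_add hκ0]; congr 1; ring
    rw [e2, e1]; field_simp
  have key : ∀ F : Finset KZ, ∑ k ∈ F, wt k.1 ^ r * ‖a k.1‖ ≤
      Real.sqrt (2 * C) * N1 ^ ((s₂ - r - 3 / 2) / (s₂ - s₁))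
          * N2 ^ ((3 / 2 + r - s₁) / (s₂ - s₁)) := by
    intro F
    have hcs := Finset.sum_sq_le_sum_mul_sum_of_sq_le_mul F
      (r := fun k : KZ => wt k.1 ^ r * ‖a k.1‖)
      (f := fun k : KZ => (wt k.1 / κ) ^ (p - 3) / (1 + (wt k.1 / κ) ^ (p + q)))
      (g := fun k : KZ => κ ^ (2 * r - 2 * s₁) * gterm s₁ 0 a k.1 +
        κ ^ (2 * r - 2 * s₂) * gterm s₂ 0 a k.1)
      (fun k _ => by have := hw0 k; positivity)
      (fun k _ => by
        have := gterm_nonneg s₁ a k.1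
        have := gterm_nonneg s₂ a k.1
        positivity)
      (fun k _ => by
        apply le_of_eq
        have hk := hw0 k
        have ht : 0 < wt k.1 / κ := by positivity
        have hD : 0 < 1 + (wt k.1 / κ) ^ (p + q) := by positivity
        rw [div_mul_eq_mul_div, eq_div_iff hD.ne']
        have i1 : (wt k.1 / κ) ^ (p - 3) * (κ ^ (2 * r - 2 * s₁) * wt k.1 ^ (2 * s₁)) =
            (wt k.1 ^ r) ^ 2 := by
          rw [Real.div_rpow hk.le hκ0.le, div_mul_eq_mul_div, div_eq_iff (by positivity)]
          have : p - 3 = 2 * r - 2 * s₁ := by rw [hp]; ring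
          rw [this]
          have h5 : wt k.1 ^ (2 * r - 2 * s₁) * wt k.1 ^ (2 * s₁) = (wt k.1 ^ r) ^ 2 := by
            rw [← Real.rpow_add hk, ← Real.rpow_natCast, ← Real.rpow_mul hk.le]
            congr 1; push_cast; ring
          rw [← h5]; ring
        have i2 : κ ^ (2 * r - 2 * s₂) * wt k.1 ^ (2 * s₂) =
            (wt k.1 / κ) ^ (p + q) * (κ ^ (2 * r - 2 * s₁) * wt k.1 ^ (2 * s₁)) := by
          rw [Real.div_rpow hk.le hκ0.le, div_mul_eq_mul_div, eq_div_iff (by positivity)]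
          have e1 : wt k.1 ^ (2 * s₂) = wt k.1 ^ (p + q) * wt k.1 ^ (2 * s₁) := by
            rw [← Real.rpow_add hk]; congr 1; rw [hp, hq]; ring
          have e2 : κ ^ (2 * r - 2 * s₁) = κ ^ (2 * r - 2 * s₂) * κ ^ (p + q) := by
            rw [← Real.rpow_add hκ0]; congr 1; rw [hp, hq]; ring
          rw [e1, e2]; ring
        simp only [gterm, mul_zero, zero_mul, Real.exp_zero, mul_one]
        rw [mul_pow, ← i1, ← mul_assoc (κ ^ (2 * r - 2 * s₂)), i2]
        ring)
    have b1 := hL κ hκ0 F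
    have b2 : ∑ k ∈ F, (κ ^ (2 * r - 2 * s₁) * gterm s₁ 0 a k.1 +
        κ ^ (2 * r - 2 * s₂) * gterm s₂ 0 a k.1) ≤ 2 * (κ ^ (2 * r - 2 * s₁) * N1 ^ 2) := by
      rw [Finset.sum_add_distrib, ← Finset.mul_sum, ← Finset.mul_sum]
      have c1 : ∑ k ∈ F, gterm s₁ 0 a k.1 ≤ N1 ^ 2 := by
        rw [hq1]; exact hs1.sum_le_tsum F (fun k _ => gterm_nonneg s₁ a k.1)
      have c2 : ∑ k ∈ F, gterm s₂ 0 a k.1 ≤ N2 ^ 2 := by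
        rw [hq2]; exact hs2.sum_le_tsum F (fun k _ => gterm_nonneg s₂ a k.1)
      have d1 := mul_le_mul_of_nonneg_left c1 (by positivity : 0 ≤ κ ^ (2 * r - 2 * s₁))
      have d2 := mul_le_mul_of_nonneg_left c2 (by positivity : 0 ≤ κ ^ (2 * r - 2 * s₂))
      linarith
    have b3 : (∑ k ∈ F, wt k.1 ^ r * ‖a k.1‖) ^ 2 ≤
        (C * κ ^ 3) * (2 * (κ ^ (2 * r - 2 * s₁) * N1 ^ 2)) := by
      refine hcs.trans (mul_le_mul b1 b2 ?_ (by positivity))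
      apply Finset.sum_nonneg
      intro k _
      have := gterm_nonneg s₁ a k.1
      have := gterm_nonneg s₂ a k.1
      positivity
    have b4 : (C * κ ^ 3) * (2 * (κ ^ (2 * r - 2 * s₁) * N1 ^ 2)) =
        (Real.sqrt (2 * C) * (κ ^ (3 / 2 + r - s₁) * N1)) ^ 2 := by
      have h5 : (κ ^ (3 / 2 + r - s₁)) ^ 2 = κ ^ 3 * κ ^ (2 * r - 2 * s₁) := by
        rw [← Real.rpow_natCast, ← Real.rpow_natCast, ← Real.rpow_mul hκ0.le,
          ← Real.rpow_add hκ0]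
        congr 1; push_cast; ring
      rw [mul_pow, mul_pow, Real.sq_sqrt (by positivity), h5]; ring
    have b5 : κ ^ (3 / 2 + r - s₁) * N1 = N1 ^ ((s₂ - r - 3 / 2) / (s₂ - s₁))
          * N2 ^ ((3 / 2 + r - s₁) / (s₂ - s₁)) := by
      have h6 : (s₂ - r - 3 / 2) / (s₂ - s₁) = 1 - (3 / 2 + r - s₁) / (s₂ - s₁) := by
        field_simp; ring
      rw [hκp, Real.div_rpow hN2.le hN1.le, h6, Real.rpow_sub hN1, Real.rpow_one]
      field_simp
    rw [b4] at b3
    rw [mul_assoc, ← b5]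
    exact (pow_le_pow_iff_left₀ (Finset.sum_nonneg fun k _ => by have := hw0 k; positivity) (by positivity) two_ne_zero).mp b3
  have hnn : ∀ k : KZ, 0 ≤ wt k.1 ^ r * ‖a k.1‖ := fun k => by
    have := hw0 k
    positivity
  have hsum : Summable (fun k : KZ => wt k.1 ^ r * ‖a k.1‖) := summable_of_sum_le hnn key
  exact ⟨hsum, hsum.tsum_le_of_sum_le key⟩
end

section
/- Let s₁ < 3/2, s₂ < 3/2 with s₁ + s₂ > 0. There exists a constant C > 0 depending only on s₁ and s₂ such that for all a, b : ℤ³ ∖ {0} → ℂ with ‖a‖_{s₁} < ∞ and ‖b‖_{s₂} < ∞, the convolution (a∗b)_k = ∑_{j ∈ ℤ³, j ≠ 0, j ≠ k} a_j b_{k−j} satisfies ‖a∗b‖_{s₁+s₂−3/2} ≤ C · ‖a‖_{s₁} · ‖b‖_{s₂}. -/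
open scoped BigOperators

/-- Convolution `(a∗b)_k = ∑_{j ≠ 0, j ≠ k} a_j b_{k−j}`. -/
noncomputable def convSeq (a b : (Fin 3 → ℤ) → ℂ) (k : Fin 3 → ℤ) : ℂ :=
  ∑' j : {j : Fin 3 → ℤ // j ≠ 0 ∧ j ≠ k}, a j.1 * b (k - j.1)

lemma sum1d (θ : ℝ) (h0 : 0 ≤ θ) (h1 : θ < 1) (N : ℕ) :
    ∑ n ∈ Finset.Icc (-(N:ℤ)) N, (max 1 |(n:ℝ)|) ^ (-θ) ≤ 1 + 2 * (N:ℝ) ^ (1 - θ) / (1 - θ) := by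
  induction N with
  | zero => simp [Real.zero_rpow (by linarith : 1 - θ ≠ 0)]
  | succ N ih =>
    have hI : Finset.Icc (-((N+1:ℕ):ℤ)) ((N+1:ℕ):ℤ)
        = insert (-((N:ℤ)+1)) (insert ((N:ℤ)+1) (Finset.Icc (-(N:ℤ)) N)) := by
      ext x; simp only [Finset.mem_Icc, Finset.mem_insert]; push_cast; omega
    rw [hI, Finset.sum_insert (by simp only [Finset.mem_Icc, Finset.mem_insert]; omega),
      Finset.sum_insert (by simp only [Finset.mem_Icc]; omega)]
    have hN : (0:ℝ) < (N:ℝ) + 1 := by positivity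
    have e1 : max 1 |((-((N:ℤ)+1) : ℤ):ℝ)| = (N:ℝ) + 1 := by
      push_cast
      rw [abs_neg, abs_of_pos hN]; apply max_eq_right; linarith [Nat.cast_nonneg (α := ℝ) N]
    have e2 : max 1 |((((N:ℤ)+1) : ℤ):ℝ)| = (N:ℝ) + 1 := by
      push_cast
      rw [abs_of_pos hN]; apply max_eq_right; linarith [Nat.cast_nonneg (α := ℝ) N]
    rw [e1, e2]
    have hb := rpow_one_add_le_one_add_mul_self (s := -1/((N:ℝ)+1)) (p := 1-θ)
      (by rw [le_div_iff₀ hN]; linarith [Nat.cast_nonneg (α := ℝ) N]) (by linarith) (by linarith)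
    have e3 : 1 + -1/((N:ℝ)+1) = N / (N+1) := by field_simp; ring
    rw [e3, Real.div_rpow (by positivity) hN.le, div_le_iff₀ (by positivity)] at hb
    have e4 : ((N:ℝ)+1)^(-θ) = ((N:ℝ)+1)^(1-θ) / (N+1) := by
      rw [show -θ = (1-θ) - 1 by ring, Real.rpow_sub_one hN.ne']
    have hθ : 0 < 1 - θ := by linarith
    have e5 : ((N:ℝ)+1)^(-θ) + (N:ℝ)^(1-θ)/(1-θ) ≤ ((N:ℝ)+1)^(1-θ)/(1-θ) := by
      rw [e4, ← le_sub_iff_add_le, ← sub_nonneg]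
      have : ((N:ℝ)+1)^(1-θ)/(1-θ) - (N:ℝ)^(1-θ)/(1-θ) - ((N:ℝ)+1)^(1-θ) / (N+1)
        = ((1 + (1-θ) * (-1/((N:ℝ)+1))) * ((N:ℝ)+1)^(1-θ) - (N:ℝ)^(1-θ)) / (1-θ) := by
        field_simp; ring
      have h6 := div_nonneg (sub_nonneg.2 hb) hθ.le
      linarith
    push_cast
    have e6 : 2 * (N:ℝ) ^ (1 - θ) / (1 - θ) = 2 * ((N:ℝ) ^ (1 - θ) / (1 - θ)) := by ring
    have e7 : 2 * ((N:ℝ)+1) ^ (1 - θ) / (1 - θ) = 2 * (((N:ℝ)+1) ^ (1 - θ) / (1 - θ)) := by ring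
    rw [e7]; rw [e6] at ih; linarith

lemma one_le_wt {k : Fin 3 → ℤ} (hk : k ≠ 0) : 1 ≤ wt k := by
  obtain ⟨i, hi⟩ := Function.ne_iff.1 hk
  refine le_trans ?_ (abs_le_wt k i)
  have := Int.one_le_abs hi
  exact_mod_cast this

lemma wt_pos {k : Fin 3 → ℤ} (hk : k ≠ 0) : 0 < wt k := lt_of_lt_of_le one_pos (one_le_wt hk)

lemma wt_neg (k : Fin 3 → ℤ) : wt (-k) = wt k := by simp [wt]

lemma wt_eq (k : Fin 3 → ℤ) : wt k = ‖(WithLp.toLp 2 (fun i => (k i : ℝ)) : EuclideanSpace ℝ (Fin 3))‖ := by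
  rw [EuclideanSpace.norm_eq]; simp [wt]

lemma wt_add (k l : Fin 3 → ℤ) : wt (k + l) ≤ wt k + wt l := by
  rw [wt_eq, wt_eq, wt_eq]
  refine le_trans (le_of_eq ?_) (norm_add_le _ _)
  congr 1
  ext i; simp

lemma sum3d (s : ℝ) (hs : s < 3/2) : ∃ D : ℝ, 0 < D ∧ ∀ l : Fin 3 → ℤ, l ≠ 0 →
    ∀ S : Finset (Fin 3 → ℤ), (∀ j ∈ S, j ≠ 0 ∧ wt j ≤ wt l) →
    ∑ j ∈ S, (wt l ^ (s - 3/2) * wt j ^ (-s)) ^ 2 ≤ D := by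
  set t := max s 0 with ht
  have ht0 : 0 ≤ t := le_max_right _ _
  have hts : s ≤ t := le_max_left _ _
  have ht1 : t < 3/2 := max_lt hs (by norm_num)
  set θ := 2 * t / 3 with hθ
  have hθ0 : 0 ≤ θ := by positivity
  have hθ1 : 0 < 1 - θ := by rw [hθ]; linarith
  refine ⟨(3 / (1 - θ)) ^ 3, by positivity, fun l hl S hS => ?_⟩
  set R := wt l with hR
  have hR1 : 1 ≤ R := one_le_wt hl
  have hR0 : 0 < R := by linarith
  set N := ⌊R⌋₊ with hN
  have hN1 : 1 ≤ N := Nat.le_floor (by simpa using hR1)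
  have hNR : (N:ℝ) ≤ R := Nat.floor_le hR0.le
  have hsub : S ⊆ Fintype.piFinset (fun _ : Fin 3 => Finset.Icc (-(N:ℤ)) N) := by
    intro j hj
    rw [Fintype.mem_piFinset]
    intro i
    have h1 := (abs_le_wt j i).trans (hS j hj).2
    rw [Finset.mem_Icc]
    have h2 : (((j i).natAbs : ℕ) : ℝ) ≤ R := by
      rw [Nat.cast_natAbs]; push_cast; exact h1
    have := Nat.le_floor h2
    omega
  have hterm : ∀ j ∈ S, (R ^ (s - 3/2) * wt j ^ (-s)) ^ 2 ≤
      R ^ (2 * t - 3) * ∏ i, (max 1 |(j i : ℝ)|) ^ (-θ) := by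
    intro j hj
    obtain ⟨hj0, hjR⟩ := hS j hj
    have hw := one_le_wt hj0
    have hw0 := wt_pos hj0
    have e1 : (R ^ (s - 3/2) * wt j ^ (-s)) ^ 2 = R ^ (2 * s - 3) * (wt j ^ (2*t-2*s) * wt j ^ (-2 * t)) := by
      rw [mul_pow, ← Real.rpow_natCast, ← Real.rpow_natCast, ← Real.rpow_mul hR0.le,
        ← Real.rpow_mul hw0.le, ← Real.rpow_add hw0]
      congr 2 <;> push_cast <;> ring
    have e2 : R ^ (2 * t - 3) = R ^ (2*s-3) * R ^ (2*t-2*s) := by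
      rw [← Real.rpow_add hR0]; congr 1; ring
    have e3 : wt j ^ (-2*t) ≤ ∏ i, (max 1 |(j i : ℝ)|) ^ (-θ) := by
      have : wt j ^ (-2*t) = ∏ i : Fin 3, wt j ^ (-θ) := by
        simp only [Finset.prod_const, Finset.card_univ, Fintype.card_fin]
        rw [← Real.rpow_natCast, ← Real.rpow_mul hw0.le]; congr 1; rw [hθ]; push_cast; ring
      rw [this]
      apply Finset.prod_le_prod
      · intro i _; positivity
      · intro i _
        apply Real.rpow_le_rpow_of_nonpos (by positivity) (max_le hw (abs_le_wt j i)) (by linarith)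
    rw [e1, e2, mul_assoc]
    gcongr
    linarith
  calc _ ≤ ∑ j ∈ S, R ^ (2 * t - 3) * ∏ i, (max 1 |(j i : ℝ)|) ^ (-θ) := Finset.sum_le_sum hterm
    _ ≤ ∑ j ∈ Fintype.piFinset (fun _ : Fin 3 => Finset.Icc (-(N:ℤ)) N),
        R ^ (2 * t - 3) * ∏ i, (max 1 |(j i : ℝ)|) ^ (-θ) :=
        Finset.sum_le_sum_of_subset_of_nonneg hsub (fun _ _ _ => by positivity)
    _ = R ^ (2*t-3) * ∏ i : Fin 3, ∑ n ∈ Finset.Icc (-(N:ℤ)) N, (max 1 |(n:ℝ)|) ^ (-θ) := by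
        rw [← Finset.mul_sum, Finset.prod_univ_sum]
    _ ≤ R ^ (2*t-3) * ∏ i : Fin 3, (3 / (1-θ) * R ^ (1-θ)) := by
        gcongr with i _
        refine (sum1d θ hθ0 (by linarith) N).trans ?_
        have h1 : (N:ℝ) ^ (1-θ) ≤ R ^ (1-θ) := by gcongr
        have h2 : 1 ≤ R ^ (1-θ) := Real.one_le_rpow hR1 hθ1.le
        have h3 : 1 ≤ R ^ (1-θ) / (1-θ) := by
          rw [le_div_iff₀ hθ1]; linarith
        calc 1 + 2 * (N:ℝ) ^ (1 - θ) / (1 - θ) ≤ R ^ (1-θ) / (1-θ) + 2 * R ^ (1 - θ) / (1 - θ) := by gcongr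
          _ = _ := by ring
    _ = (3/(1-θ))^3 * (R ^ (2*t-3) * (R ^ (1-θ))^3) := by
        simp only [Finset.prod_const, Finset.card_univ, Fintype.card_fin]; ring
    _ = (3/(1-θ))^3 := by
        rw [← Real.rpow_natCast (R^(1-θ)), ← Real.rpow_mul hR0.le, ← Real.rpow_add hR0]
        have : 2 * t - 3 + (1 - θ) * ((3:ℕ):ℝ) = 0 := by rw [hθ]; push_cast; ring
        rw [this]; simp

open scoped ENNReal in
lemma cs_tsum {ι : Type*} (f g : ι → ℝ≥0∞) : (∑' i, f i * g i) ^ 2 ≤ (∑' i, f i ^ 2) * ∑' i, g i ^ 2 := by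
  let _ : MeasurableSpace ι := ⊤
  have h := ENNReal.lintegral_mul_le_Lp_mul_Lq (MeasureTheory.Measure.count (α := ι))
    Real.HolderConjugate.two_two (f := f) (g := g) (measurable_from_top).aemeasurable
    (measurable_from_top).aemeasurable
  simp only [MeasureTheory.lintegral_count, Pi.mul_apply] at h
  calc _ ≤ _ := pow_le_pow_left₀ zero_le h 2
    _ = _ := by
      rw [mul_pow, ← ENNReal.rpow_natCast, ← ENNReal.rpow_natCast, ← ENNReal.rpow_mul, ← ENNReal.rpow_mul]
      norm_num

open scoped Classical ENNReal in
noncomputable def kap (s : ℝ) (l j : Fin 3 → ℤ) : ℝ≥0∞ :=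
  if l ≠ 0 ∧ j ≠ 0 ∧ wt j ≤ wt l then ENNReal.ofReal (wt l ^ (s - 3/2) * wt j ^ (-s)) else 0

open scoped ENNReal in
lemma kap_sum (s : ℝ) (hs : s < 3/2) : ∃ D : ℝ≥0∞, D ≠ ⊤ ∧ ∀ l, ∑' j, kap s l j ^ 2 ≤ D := by
  classical
  obtain ⟨D, hD, h⟩ := sum3d s hs
  refine ⟨ENNReal.ofReal D, ENNReal.ofReal_ne_top, fun l => ?_⟩
  by_cases hl : l = 0
  · simp [kap, hl]
  rw [ENNReal.tsum_eq_iSup_sum]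
  refine iSup_le fun S => ?_
  have h' := h l hl (S.filter fun j => j ≠ 0 ∧ wt j ≤ wt l) (fun j hj => (Finset.mem_filter.1 hj).2)
  refine le_trans (le_of_eq ?_) (ENNReal.ofReal_le_ofReal h')
  rw [ENNReal.ofReal_sum_of_nonneg (fun _ _ => sq_nonneg _), Finset.sum_filter]
  refine Finset.sum_congr rfl fun j _ => ?_
  unfold kap
  have hnn : 0 ≤ wt l ^ (s - 3/2) * wt j ^ (-s) := by
    have : 0 ≤ wt l := Real.sqrt_nonneg _
    have : 0 ≤ wt j := Real.sqrt_nonneg _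
    positivity
  by_cases hc : j ≠ 0 ∧ wt j ≤ wt l
  · rw [if_pos ⟨hl, hc⟩, if_pos hc, ENNReal.ofReal_pow hnn]
  · rw [if_neg (fun h => hc h.2), if_neg hc]; simp

open scoped ENNReal in
lemma tri_piece (s : ℝ) (hs : s < 3/2) : ∃ D : ℝ≥0∞, D ≠ ⊤ ∧ ∀ F G H : (Fin 3 → ℤ) → ℝ≥0∞,
    (∑' l, ∑' j, kap s l j * (F j * G l * H (j + l))) ^ 2 ≤
      D * ((∑' j, F j ^ 2) * (∑' j, G j ^ 2) * (∑' j, H j ^ 2)) := by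
  obtain ⟨D, hD, h⟩ := kap_sum s hs
  refine ⟨D, hD, fun F G H => ?_⟩
  calc (∑' l, ∑' j, kap s l j * (F j * G l * H (j + l))) ^ 2
      = (∑' l, G l * ∑' j, kap s l j * (F j * H (j + l))) ^ 2 := by
        congr 2; ext l; rw [← ENNReal.tsum_mul_left]; congr 1; ext j; ring
    _ ≤ (∑' l, G l ^ 2) * ∑' l, (∑' j, kap s l j * (F j * H (j + l))) ^ 2 := cs_tsum _ _
    _ ≤ (∑' l, G l ^ 2) * ∑' l, (D * ∑' j, (F j * H (j + l)) ^ 2) := by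
        gcongr with l
        exact (cs_tsum _ _).trans (by gcongr; exact h l)
    _ = (∑' l, G l ^ 2) * (D * ∑' j, F j ^ 2 * ∑' l, H (j + l) ^ 2) := by
        rw [ENNReal.tsum_mul_left, ENNReal.tsum_comm]
        congr 3; ext j; rw [← ENNReal.tsum_mul_left]; congr 1; ext l; ring
    _ = (∑' l, G l ^ 2) * (D * ∑' j, F j ^ 2 * ∑' l, H l ^ 2) := by
        congr 3; ext j; congr 1
        exact (Equiv.addLeft j).tsum_eq (fun l => H l ^ 2)
    _ = _ := by rw [ENNReal.tsum_mul_right]; ring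

lemma ker_aux (x y z s2 s3 : ℝ) (hy : 0 < y) (hz : 0 < z) (h1 : x ≤ y) (h2 : x ≤ z)
    (h3 : y ≤ x + z) (h4 : z ≤ x + y) : y ^ (-s2) * z ^ (-s3) ≤ 2 ^ |s3| * y ^ (-s2-s3) := by
  have e : y ^ (-s2) * z ^ (-s3) = (z / y) ^ (-s3) * y ^ (-s2-s3) := by
    rw [Real.div_rpow hz.le hy.le, show -s2 - s3 = -s2 + -s3 by ring, Real.rpow_add hy]
    have : y ^ (-s3) ≠ 0 := (Real.rpow_pos_of_pos hy _).ne'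
    field_simp
  rw [e]
  gcongr
  rcases le_total 0 s3 with h | h
  · rw [Real.rpow_neg (by positivity), ← Real.inv_rpow (by positivity), abs_of_nonneg h]
    gcongr
    rw [inv_div, div_le_iff₀ hz]; linarith
  · rw [abs_of_nonpos h]
    gcongr
    · linarith
    · rw [div_le_iff₀ hy]; linarith

open scoped Classical ENNReal in
noncomputable def KK (s1 s2 s3 : ℝ) (j l : Fin 3 → ℤ) : ℝ≥0∞ :=
  if j ≠ 0 ∧ l ≠ 0 ∧ j + l ≠ 0 then
    ENNReal.ofReal (wt j ^ (-s1) * wt l ^ (-s2) * wt (j + l) ^ (-s3)) else 0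

lemma kap_neg (s : ℝ) (l j : Fin 3 → ℤ) : kap s (-l) j = kap s l j := by
  simp [kap, wt_neg]

lemma two_pow_le (a b : ℝ) (h : a ≤ b) : (2:ℝ) ^ a ≤ 2 ^ b :=
  Real.rpow_le_rpow_of_exponent_le (by norm_num) h

lemma KK_le (s1 s2 s3 : ℝ) (hs : s1 + s2 + s3 = 3/2) (j l : Fin 3 → ℤ) :
    KK s1 s2 s3 j l ≤ ENNReal.ofReal (2 ^ (|s1| + |s2| + |s3|)) *
      (kap s1 l j + kap s2 j l + kap s3 j (j + l)) := by
  unfold KK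
  split_ifs with h
  swap
  · exact zero_le
  obtain ⟨hj, hl, hk⟩ := h
  have pj := wt_pos hj
  have pl := wt_pos hl
  have pk := wt_pos hk
  have t1 : wt (j + l) ≤ wt j + wt l := wt_add j l
  have t2 : wt j ≤ wt (j+l) + wt l := by
    have := wt_add (j + l) (-l)
    rwa [wt_neg, add_neg_cancel_right] at this
  have t3 : wt l ≤ wt (j+l) + wt j := by
    have := wt_add (j + l) (-j)
    rwa [wt_neg, add_neg_cancel_comm] at this
  set x := wt j with hx
  set y := wt l with hy
  set z := wt (j + l) with hz
  have hcase : (x ≤ y ∧ x ≤ z) ∨ (y ≤ x ∧ y ≤ z) ∨ (z ≤ x ∧ z ≤ y) := by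
    rcases le_total x y with h1 | h1 <;> rcases le_total x z with h2 | h2 <;>
      rcases le_total y z with h3 | h3 <;> grind
  rcases hcase with ⟨c1, c2⟩ | ⟨c1, c2⟩ | ⟨c1, c2⟩
  · have hk1 : kap s1 l j = ENNReal.ofReal (y ^ (s1 - 3/2) * x ^ (-s1)) := by
      unfold kap; rw [if_pos ⟨hl, hj, c1⟩]
    have := ker_aux x y z s2 s3 pl pk c1 c2 (by linarith) (by linarith)
    calc _ ≤ ENNReal.ofReal (2 ^ (|s1| + |s2| + |s3|) * (y ^ (s1 - 3/2) * x ^ (-s1))) := by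
          apply ENNReal.ofReal_le_ofReal
          calc x ^ (-s1) * y ^ (-s2) * z ^ (-s3) = x ^ (-s1) * (y ^ (-s2) * z ^ (-s3)) := by ring
            _ ≤ x ^ (-s1) * (2 ^ (|s1| + |s2| + |s3|) * y ^ (-s2-s3)) := by
              refine mul_le_mul_of_nonneg_left ?_ (by positivity)
              refine this.trans ?_
              refine mul_le_mul_of_nonneg_right (two_pow_le _ _ ?_) (by positivity)
              linarith [abs_nonneg s1, abs_nonneg s2]
            _ = _ := by rw [show -s2-s3 = s1 - 3/2 by linarith]; ring
      _ = ENNReal.ofReal (2 ^ (|s1| + |s2| + |s3|)) * kap s1 l j := by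
          rw [hk1, ENNReal.ofReal_mul (by positivity)]
      _ ≤ _ := by
          gcongr
          rw [add_assoc]; exact le_self_add
  · have hk1 : kap s2 j l = ENNReal.ofReal (x ^ (s2 - 3/2) * y ^ (-s2)) := by
      unfold kap; rw [if_pos ⟨hj, hl, c1⟩]
    have := ker_aux y x z s1 s3 pj pk c1 c2 (by linarith) (by linarith)
    calc _ ≤ ENNReal.ofReal (2 ^ (|s1| + |s2| + |s3|) * (x ^ (s2 - 3/2) * y ^ (-s2))) := by
          apply ENNReal.ofReal_le_ofReal
          calc x ^ (-s1) * y ^ (-s2) * z ^ (-s3) = y ^ (-s2) * (x ^ (-s1) * z ^ (-s3)) := by ring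
            _ ≤ y ^ (-s2) * (2 ^ (|s1| + |s2| + |s3|) * x ^ (-s1-s3)) := by
              refine mul_le_mul_of_nonneg_left ?_ (by positivity)
              refine this.trans ?_
              refine mul_le_mul_of_nonneg_right (two_pow_le _ _ ?_) (by positivity)
              linarith [abs_nonneg s1, abs_nonneg s2]
            _ = _ := by rw [show -s1-s3 = s2 - 3/2 by linarith]; ring
      _ = ENNReal.ofReal (2 ^ (|s1| + |s2| + |s3|)) * kap s2 j l := by
          rw [hk1, ENNReal.ofReal_mul (by positivity)]
      _ ≤ _ := by
          gcongr
          rw [add_right_comm]; exact le_add_self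
  · have hk1 : kap s3 j (j+l) = ENNReal.ofReal (x ^ (s3 - 3/2) * z ^ (-s3)) := by
      unfold kap; rw [if_pos ⟨hj, hk, c1⟩]
    have := ker_aux z x y s1 s2 pj pl c1 c2 (by linarith) (by linarith)
    calc _ ≤ ENNReal.ofReal (2 ^ (|s1| + |s2| + |s3|) * (x ^ (s3 - 3/2) * z ^ (-s3))) := by
          apply ENNReal.ofReal_le_ofReal
          calc x ^ (-s1) * y ^ (-s2) * z ^ (-s3) = z ^ (-s3) * (x ^ (-s1) * y ^ (-s2)) := by ring
            _ ≤ z ^ (-s3) * (2 ^ (|s1| + |s2| + |s3|) * x ^ (-s1-s2)) := by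
              refine mul_le_mul_of_nonneg_left ?_ (by positivity)
              refine this.trans ?_
              refine mul_le_mul_of_nonneg_right (two_pow_le _ _ ?_) (by positivity)
              linarith [abs_nonneg s1, abs_nonneg s3]
            _ = _ := by rw [show -s1-s2 = s3 - 3/2 by linarith]; ring
      _ = ENNReal.ofReal (2 ^ (|s1| + |s2| + |s3|)) * kap s3 j (j+l) := by
          rw [hk1, ENNReal.ofReal_mul (by positivity)]
      _ ≤ _ := by
          gcongr
          exact le_add_self

open scoped ENNReal in
lemma tri (s1 s2 s3 : ℝ) (hs : s1 + s2 + s3 = 3/2) (h1 : s1 < 3/2) (h2 : s2 < 3/2) (h3 : s3 < 3/2) :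
    ∃ D : ℝ≥0∞, D ≠ ⊤ ∧ ∀ F G H : (Fin 3 → ℤ) → ℝ≥0∞,
    (∑' l, ∑' j, KK s1 s2 s3 j l * (F j * G l * H (j + l))) ^ 2 ≤
      D * ((∑' j, F j ^ 2) * (∑' j, G j ^ 2) * (∑' j, H j ^ 2)) := by
  obtain ⟨D1, hD1, t1⟩ := tri_piece s1 h1
  obtain ⟨D2, hD2, t2⟩ := tri_piece s2 h2
  obtain ⟨D3, hD3, t3⟩ := tri_piece s3 h3
  set c := ENNReal.ofReal (2 ^ (|s1| + |s2| + |s3|)) with hc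
  have hct : c ≠ ⊤ := ENNReal.ofReal_ne_top
  refine ⟨(c * 3) ^ 2 * (D1 + D2 + D3), ENNReal.mul_ne_top (ENNReal.pow_ne_top
    (ENNReal.mul_ne_top hct (by norm_num))) (by simp [hD1, hD2, hD3]), fun F G H => ?_⟩
  set T1 := ∑' l, ∑' j, kap s1 l j * (F j * G l * H (j + l)) with hT1
  set T2 := ∑' l, ∑' j, kap s2 j l * (F j * G l * H (j + l)) with hT2
  set T3 := ∑' l, ∑' j, kap s3 j (j+l) * (F j * G l * H (j + l)) with hT3
  set M := (∑' j, F j ^ 2) * (∑' j, G j ^ 2) * (∑' j, H j ^ 2) with hM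
  have b1 : T1 ^ 2 ≤ D1 * M := t1 F G H
  have b2 : T2 ^ 2 ≤ D2 * M := by
    have := t2 G F H
    rw [mul_comm (∑' j, G j ^ 2)] at this
    convert this using 2
    rw [hT2, ENNReal.tsum_comm]
    refine tsum_congr fun l => tsum_congr fun j => ?_
    rw [add_comm l j]; ring
  have b3 : T3 ^ 2 ≤ D3 * M := by
    have := t3 H (fun l => F (-l)) G
    have hneg : ∑' j, F (-j) ^ 2 = ∑' j, F j ^ 2 :=
      (Equiv.neg (Fin 3 → ℤ)).tsum_eq (fun l => F l ^ 2)
    rw [hneg] at this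
    convert this using 2
    · rw [hT3, ENNReal.tsum_comm, ← (Equiv.neg (Fin 3 → ℤ)).tsum_eq]
      refine tsum_congr fun l => ?_
      simp only [Equiv.neg_apply]
      rw [← (Equiv.addLeft (l)).tsum_eq]
      refine tsum_congr fun k => ?_
      simp only [Equiv.coe_addLeft]
      rw [kap_neg, neg_add_cancel_left, add_comm l k]; ring
    · rw [hM]; ring
  have hT : (∑' l, ∑' j, KK s1 s2 s3 j l * (F j * G l * H (j + l))) ≤ c * (T1 + T2 + T3) := by
    rw [hT1, hT2, hT3, ← ENNReal.tsum_add, ← ENNReal.tsum_add, ← ENNReal.tsum_mul_left]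
    refine ENNReal.tsum_le_tsum fun l => ?_
    rw [← ENNReal.tsum_add, ← ENNReal.tsum_add, ← ENNReal.tsum_mul_left]
    refine ENNReal.tsum_le_tsum fun j => ?_
    calc _ ≤ _ := mul_le_mul_left (KK_le s1 s2 s3 hs j l) _
      _ = _ := by ring
  obtain ⟨N, n1, n2, n3, hN⟩ : ∃ N, T1 ≤ N ∧ T2 ≤ N ∧ T3 ≤ N ∧ N ^ 2 ≤ (D1 + D2 + D3) * M := by
    have e1 : D1 * M ≤ (D1 + D2 + D3) * M := by
      gcongr; rw [add_assoc]; exact le_self_add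
    have e2 : D2 * M ≤ (D1 + D2 + D3) * M := by
      gcongr; rw [add_right_comm]; exact le_add_self
    have e3 : D3 * M ≤ (D1 + D2 + D3) * M := by
      gcongr; exact le_add_self
    rcases le_total T1 T2 with q | q <;> rcases le_total T2 T3 with q' | q' <;>
      rcases le_total T1 T3 with q'' | q''
    · exact ⟨T3, q'', q', le_rfl, b3.trans e3⟩
    · exact ⟨T3, q.trans q', q', le_rfl, b3.trans e3⟩
    · exact ⟨T2, q, le_rfl, q', b2.trans e2⟩
    · exact ⟨T2, q, le_rfl, q', b2.trans e2⟩
    · exact ⟨T3, q'', q', le_rfl, b3.trans e3⟩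
    · exact ⟨T1, le_rfl, q, q'', b1.trans e1⟩
    · exact ⟨T1, le_rfl, q, q'.trans q, b1.trans e1⟩
    · exact ⟨T1, le_rfl, q, q'', b1.trans e1⟩
  calc _ ≤ (c * (T1 + T2 + T3)) ^ 2 := by gcongr
    _ ≤ (c * (N + N + N)) ^ 2 := by gcongr
    _ = (c * 3) ^ 2 * N ^ 2 := by ring
    _ ≤ (c * 3) ^ 2 * ((D1 + D2 + D3) * M) := by gcongr
    _ = _ := by ring

open scoped ENNReal in
lemma dual {ι : Type*} (A : ι → ℝ≥0∞) (M : ℝ≥0∞) (hM : M ≠ ⊤)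
    (h : ∀ H : ι → ℝ≥0∞, (∑' k, A k * H k) ^ 2 ≤ M * ∑' k, H k ^ 2) :
    (∑' k, A k ^ 2) ≤ M := by
  classical
  have hA : ∀ k, A k ≠ ⊤ := by
    intro k hk
    have := h (Pi.single k 1)
    rw [tsum_eq_single k (by intro b hb; simp [hb]), tsum_eq_single k (by intro b hb; simp [hb])] at this
    simp [hk] at this
    exact hM this
  rw [ENNReal.tsum_eq_iSup_sum]
  refine iSup_le fun S => ?_
  have := h (fun k => if k ∈ S then A k else 0)
  rw [tsum_eq_sum (s := S) (by intro b hb; simp [hb]), tsum_eq_sum (s := S) (by intro b hb; simp [hb])] at this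
  have e1 : ∑ k ∈ S, A k * (if k ∈ S then A k else 0) = ∑ k ∈ S, A k ^ 2 :=
    Finset.sum_congr rfl fun k hk => by rw [if_pos hk, sq]
  have e2 : ∑ k ∈ S, (if k ∈ S then A k else 0) ^ 2 = ∑ k ∈ S, A k ^ 2 :=
    Finset.sum_congr rfl fun k hk => by rw [if_pos hk]
  rw [e1, e2, sq] at this
  have hfin : ∑ k ∈ S, A k ^ 2 ≠ ⊤ := by
    rw [ENNReal.sum_ne_top]; intro k _; exact ENNReal.pow_ne_top (hA k)
  by_cases h0 : ∑ k ∈ S, A k ^ 2 = 0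
  · rw [h0]; exact zero_le
  exact (ENNReal.mul_le_mul_iff_left h0 hfin).1 this

open scoped Classical ENNReal in
noncomputable def FF (s : ℝ) (a : (Fin 3 → ℤ) → ℂ) (j : Fin 3 → ℤ) : ℝ≥0∞ :=
  if j = 0 then 0 else ENNReal.ofReal (wt j ^ s * ‖a j‖)

open scoped Classical ENNReal in
noncomputable def AA (σ : ℝ) (a b : (Fin 3 → ℤ) → ℂ) (k : Fin 3 → ℤ) : ℝ≥0∞ :=
  if k = 0 then 0 else ENNReal.ofReal (wt k ^ σ) *
    ∑' j, if j ≠ 0 ∧ j ≠ k then ENNReal.ofReal (‖a j * b (k - j)‖) else 0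

lemma gterm_eq (s : ℝ) (a : (Fin 3 → ℤ) → ℂ) {k : Fin 3 → ℤ} (hk : k ≠ 0) :
    gterm s 0 a k = (wt k ^ s * ‖a k‖) ^ 2 := by
  unfold gterm
  rw [mul_pow, ← Real.rpow_natCast (wt k ^ s), ← Real.rpow_mul (wt_pos hk).le]
  simp [mul_comm]

lemma tsum_ne_zero (f : (Fin 3 → ℤ) → ENNReal) (h0 : f 0 = 0) :
    ∑' k, f k = ∑' k : {k : Fin 3 → ℤ // k ≠ 0}, f k.1 := by
  refine (tsum_subtype_eq_of_support_subset (s := {k | k ≠ 0}) ?_).symm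
  intro k hk hk0
  rw [Function.mem_support] at hk
  apply hk
  rw [hk0, h0]

lemma FF_sum (s : ℝ) (a : (Fin 3 → ℤ) → ℂ)
    (h : Summable (fun k : {k : Fin 3 → ℤ // k ≠ 0} => gterm s 0 a k.1)) :
    ∑' j, FF s a j ^ 2 = ENNReal.ofReal (gnorm s 0 a ^ 2) := by
  rw [tsum_ne_zero _ (by simp [FF]), gnorm, Real.sq_sqrt (tsum_nonneg fun k => gterm_nonneg _ _ _),
    ENNReal.ofReal_tsum_of_nonneg (fun k => gterm_nonneg _ _ _) h]
  refine tsum_congr fun k => ?_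
  have hp := wt_pos k.2
  rw [gterm_eq s a k.2, FF, if_neg k.2, ENNReal.ofReal_pow (by positivity)]

lemma AA_eq (s1 s2 s3 : ℝ) (a b : (Fin 3 → ℤ) → ℂ) (H : (Fin 3 → ℤ) → ENNReal) :
    ∑' k, AA (-s3) a b k * H k =
      ∑' l, ∑' j, KK s1 s2 s3 j l * (FF s1 a j * FF s2 b l * H (j + l)) := by
  have e : ∑' l, ∑' j, KK s1 s2 s3 j l * (FF s1 a j * FF s2 b l * H (j + l)) =
      ∑' k, ∑' j, KK s1 s2 s3 j (k - j) * (FF s1 a j * FF s2 b (k - j) * H k) := by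
    rw [ENNReal.tsum_comm, ENNReal.tsum_comm (α := Fin 3 → ℤ) (β := Fin 3 → ℤ)
      (f := fun k j => KK s1 s2 s3 j (k - j) * (FF s1 a j * FF s2 b (k - j) * H k))]
    refine tsum_congr fun j => ?_
    rw [← (Equiv.addLeft j).tsum_eq
      (fun k => KK s1 s2 s3 j (k - j) * (FF s1 a j * FF s2 b (k - j) * H k))]
    refine tsum_congr fun l => ?_
    simp
  rw [e]
  refine tsum_congr fun k => ?_
  by_cases hk : k = 0
  · subst hk
    simp [AA, KK]
  rw [AA, if_neg hk, mul_right_comm, ← ENNReal.tsum_mul_left]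
  refine tsum_congr fun j => ?_
  by_cases hj : j ≠ 0 ∧ j ≠ k
  · have hl : k - j ≠ 0 := sub_ne_zero.2 (Ne.symm hj.2)
    have pj := wt_pos hj.1
    have pl := wt_pos hl
    have pk := wt_pos hk
    rw [if_pos hj, KK, if_pos ⟨hj.1, hl, by simpa using hk⟩, FF, FF, if_neg hj.1, if_neg hl,
      mul_right_comm, ← mul_assoc, ← ENNReal.ofReal_mul (Real.rpow_nonneg pk.le _),
      ← ENNReal.ofReal_mul (mul_nonneg (Real.rpow_nonneg pj.le _) (norm_nonneg _)),
      ← ENNReal.ofReal_mul (by rw [add_sub_cancel]; positivity)]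
    rw [show j + (k - j) = k by abel]
    congr 2
    rw [norm_mul, Real.rpow_neg pj.le, Real.rpow_neg pl.le]
    have := (Real.rpow_pos_of_pos pj s1).ne'
    have := (Real.rpow_pos_of_pos pl s2).ne'
    field_simp
  · rw [if_neg hj, mul_zero]
    symm
    rw [KK, if_neg, zero_mul]
    rintro ⟨q1, q2, _⟩
    exact hj ⟨q1, fun h => q2 (by rw [h, sub_self])⟩

lemma AA_inner (a b : (Fin 3 → ℤ) → ℂ) (k : Fin 3 → ℤ) :
    (open scoped Classical in ∑' j, if j ≠ 0 ∧ j ≠ k then ENNReal.ofReal (‖a j * b (k - j)‖) else 0)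
    = ∑' j : {j : Fin 3 → ℤ // j ≠ 0 ∧ j ≠ k}, ENNReal.ofReal ‖a j.1 * b (k - j.1)‖ := by
  classical
  have := tsum_subtype {j : Fin 3 → ℤ | j ≠ 0 ∧ j ≠ k} (fun j => ENNReal.ofReal (‖a j * b (k - j)‖))
  refine Eq.trans ?_ this.symm
  refine tsum_congr fun j => ?_
  simp [Set.indicator_apply]

lemma summable_of_ne_top {ι : Type*} (f : ι → ℝ) (h0 : ∀ i, 0 ≤ f i)
    (h : ∑' i, ENNReal.ofReal (f i) ≠ ⊤) : Summable f := by
  have := ENNReal.summable_toReal h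
  refine this.congr fun i => ?_
  rw [ENNReal.toReal_ofReal (h0 i)]

/-- convolution estimate `‖a∗b‖_{s₁+s₂−3/2} ≤ C ‖a‖_{s₁} ‖b‖_{s₂}`
for `s₁, s₂ < 3/2`, `s₁ + s₂ > 0`. -/
theorem stmt2 (s₁ s₂ : ℝ) (h1 : s₁ < 3 / 2) (h2 : s₂ < 3 / 2) (h3 : 0 < s₁ + s₂) :
    ∃ C : ℝ, 0 < C ∧ ∀ a b : (Fin 3 → ℤ) → ℂ,
      Summable (fun k : {k : Fin 3 → ℤ // k ≠ 0} => gterm s₁ 0 a k.1) →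
      Summable (fun k : {k : Fin 3 → ℤ // k ≠ 0} => gterm s₂ 0 b k.1) →
      (∀ k : Fin 3 → ℤ,
        Summable (fun j : {j : Fin 3 → ℤ // j ≠ 0 ∧ j ≠ k} => a j.1 * b (k - j.1))) ∧
      Summable (fun k : {k : Fin 3 → ℤ // k ≠ 0} =>
        gterm (s₁ + s₂ - 3 / 2) 0 (convSeq a b) k.1) ∧
      gnorm (s₁ + s₂ - 3 / 2) 0 (convSeq a b) ≤ C * gnorm s₁ 0 a * gnorm s₂ 0 b := by
  obtain ⟨D, hD, ht⟩ := tri s₁ s₂ (3/2 - s₁ - s₂) (by ring) h1 h2 (by linarith)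
  have hσ : -(3/2 - s₁ - s₂) = s₁ + s₂ - 3/2 := by ring
  set σ := s₁ + s₂ - 3/2 with hσd
  refine ⟨Real.sqrt (D.toReal + 1), by positivity, fun a b ha hb => ?_⟩
  set X := gnorm s₁ 0 a with hX
  set Y := gnorm s₂ 0 b with hY
  have hX0 : 0 ≤ X := Real.sqrt_nonneg _
  have hY0 : 0 ≤ Y := Real.sqrt_nonneg _
  set M := D * (ENNReal.ofReal (X ^ 2) * ENNReal.ofReal (Y ^ 2)) with hM
  have hMt : M ≠ ⊤ := ENNReal.mul_ne_top hD
    (ENNReal.mul_ne_top ENNReal.ofReal_ne_top ENNReal.ofReal_ne_top)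
  have hA : ∑' k, AA σ a b k ^ 2 ≤ M := by
    refine dual _ M hMt fun H => ?_
    rw [← hσ, AA_eq s₁ s₂]
    refine (ht _ _ H).trans (le_of_eq ?_)
    rw [FF_sum s₁ a ha, FF_sum s₂ b hb, hM]; ring
  have hAk : ∀ k, AA σ a b k ≠ ⊤ := by
    intro k hk
    have : AA σ a b k ^ 2 ≤ M := (ENNReal.le_tsum k).trans hA
    rw [hk] at this
    simp at this
    exact hMt this
  have hsum : ∀ k : Fin 3 → ℤ, k ≠ 0 →
      Summable (fun j : {j : Fin 3 → ℤ // j ≠ 0 ∧ j ≠ k} => ‖a j.1 * b (k - j.1)‖) := by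
    intro k hk
    apply summable_of_ne_top _ (fun _ => norm_nonneg _)
    rw [← AA_inner]
    intro htop
    apply hAk k
    rw [AA, if_neg hk, htop]
    apply ENNReal.mul_top
    simpa using Real.rpow_pos_of_pos (wt_pos hk) σ
  have hle : ∀ k : {k : Fin 3 → ℤ // k ≠ 0},
      ENNReal.ofReal (gterm σ 0 (convSeq a b) k.1) ≤ AA σ a b k.1 ^ 2 := by
    rintro ⟨k, hk⟩
    have pk := wt_pos hk
    simp only
    rw [gterm_eq _ _ hk, ENNReal.ofReal_pow (by positivity), ENNReal.ofReal_mul (by positivity),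
      AA, if_neg hk, AA_inner, ← ENNReal.ofReal_tsum_of_nonneg (fun _ => norm_nonneg _) (hsum k hk)]
    gcongr
    exact norm_tsum_le_tsum_norm (hsum k hk)
  have hfin : ∑' k : {k : Fin 3 → ℤ // k ≠ 0},
      ENNReal.ofReal (gterm σ 0 (convSeq a b) k.1) ≤ M := by
    refine (ENNReal.tsum_le_tsum hle).trans ?_
    rw [← tsum_ne_zero (fun k => AA σ a b k ^ 2) (by simp [AA])]
    exact hA
  have hS : Summable (fun k : {k : Fin 3 → ℤ // k ≠ 0} => gterm σ 0 (convSeq a b) k.1) :=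
    summable_of_ne_top _ (fun _ => gterm_nonneg _ _ _) (ne_top_of_le_ne_top hMt hfin)
  refine ⟨fun k => ?_, hS, ?_⟩
  · by_cases hk : k = 0
    · subst hk
      have hb' : Summable (fun k : {k : Fin 3 → ℤ // k ≠ 0} => gterm s₂ 0 b (-k.1)) := by
        let e : {k : Fin 3 → ℤ // k ≠ 0} ≃ {k : Fin 3 → ℤ // k ≠ 0} :=
          (Equiv.neg (Fin 3 → ℤ)).subtypeEquiv (fun k => by simp)
        exact (e.summable_iff).2 hb
      have hab := ha.add hb'
      let i : {j : Fin 3 → ℤ // j ≠ 0 ∧ j ≠ 0} → {k : Fin 3 → ℤ // k ≠ 0} := fun j => ⟨j.1, j.2.1⟩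
      have hi : Function.Injective i := by
        intro x y hxy; apply Subtype.ext; simpa [i] using hxy
      refine Summable.of_norm_bounded (hab.comp_injective hi) ?_
      rintro ⟨j, hj, _⟩
      simp only [Function.comp, i, zero_sub, norm_mul]
      have hnj : -j ≠ 0 := by simpa using hj
      have pj := wt_pos hj
      rw [gterm_eq _ _ hj, gterm_eq _ _ hnj, wt_neg]
      have e1 : ‖a j‖ * ‖b (-j)‖ ≤ (wt j ^ s₁ * ‖a j‖) * (wt j ^ s₂ * ‖b (-j)‖) := by
        have : 1 ≤ wt j ^ s₁ * wt j ^ s₂ := by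
          rw [← Real.rpow_add pj]; exact Real.one_le_rpow (one_le_wt hj) h3.le
        calc _ = 1 * (‖a j‖ * ‖b (-j)‖) := by ring
          _ ≤ (wt j ^ s₁ * wt j ^ s₂) * (‖a j‖ * ‖b (-j)‖) := by gcongr
          _ = _ := by ring
      nlinarith [sq_nonneg (wt j ^ s₁ * ‖a j‖ - wt j ^ s₂ * ‖b (-j)‖),
        sq_nonneg (wt j ^ s₁ * ‖a j‖), sq_nonneg (wt j ^ s₂ * ‖b (-j)‖)]
    · exact (hsum k hk).of_norm
  · rw [← ENNReal.ofReal_tsum_of_nonneg (fun _ => gterm_nonneg _ _ _) hS] at hfin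
    have hDr : D = ENNReal.ofReal D.toReal := (ENNReal.ofReal_toReal hD).symm
    have hD0 : 0 ≤ D.toReal := ENNReal.toReal_nonneg
    rw [hM, hDr, ← ENNReal.ofReal_mul (by positivity), ← ENNReal.ofReal_mul (by positivity),
      ENNReal.ofReal_le_ofReal_iff (by positivity)] at hfin
    rw [gnorm]
    apply Real.sqrt_le_iff.2 ⟨by positivity, ?_⟩
    rw [mul_pow, mul_pow, Real.sq_sqrt (by positivity)]
    refine hfin.trans ?_
    rw [mul_assoc]
    gcongr
    linarith
end

section
/- Let b > 0, c > 0, γ > 0, T > 0 and let y : [0, T) → (0, ∞) be differentiable with y'(t) ≤ c·y(t)^(1+γ) + b·y(t) for all t ∈ [0, T). Set t* = (1/(bγ)) · log(1 + b/(c·y(0)^γ)). Then for all t ∈ [0, min(T, t*)), one has 1 − (c/b)·y(0)^γ·(e^{bγt} − 1) > 0 and y(t) ≤ e^{bt} · y(0) · (1 − (c/b)·y(0)^γ·(e^{bγt} − 1))^(−1/γ). -/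
/-- scalar differential inequality `y' ≤ c y^{1+γ} + b y` implies
`y(t) ≤ e^{bt} y(0) (1 − (c/b) y(0)^γ (e^{bγt} − 1))^{−1/γ}` for
`t < min(T, t*)`, where `t* = (1/(bγ)) log(1 + b/(c y(0)^γ))`. -/
theorem stmt10 (b c γ T : ℝ) (hb : 0 < b) (hc : 0 < c) (hγ : 0 < γ) (hT : 0 < T)
    (y y' : ℝ → ℝ)
    (hpos : ∀ t ∈ Set.Ico (0 : ℝ) T, 0 < y t)
    (hderiv : ∀ t ∈ Set.Ico (0 : ℝ) T, HasDerivWithinAt y (y' t) (Set.Ico (0 : ℝ) T) t)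
    (hineq : ∀ t ∈ Set.Ico (0 : ℝ) T, y' t ≤ c * y t ^ (1 + γ) + b * y t) :
    ∀ t ∈ Set.Ico (0 : ℝ)
        (min T ((1 / (b * γ)) * Real.log (1 + b / (c * y 0 ^ γ)))),
      0 < 1 - (c / b) * y 0 ^ γ * (Real.exp (b * γ * t) - 1) ∧
      y t ≤ Real.exp (b * t) * y 0 *
        (1 - (c / b) * y 0 ^ γ * (Real.exp (b * γ * t) - 1)) ^ (-(1 / γ)) := by
  intro t ht
  obtain ⟨ht0, ht1⟩ := ht
  obtain ⟨htT, hts⟩ := lt_min_iff.mp ht1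
  have h0 : (0 : ℝ) ∈ Set.Ico (0 : ℝ) T := ⟨le_rfl, hT⟩
  have htI : t ∈ Set.Ico (0 : ℝ) T := ⟨ht0, htT⟩
  have hy0 := hpos 0 h0
  have hyt := hpos t htI
  have hP : 0 < y 0 ^ γ := Real.rpow_pos_of_pos hy0 γ
  have hQ : 0 < 1 - (c / b) * y 0 ^ γ * (Real.exp (b * γ * t) - 1) := by
    have h1 : b * γ * t < Real.log (1 + b / (c * y 0 ^ γ)) := by
      have := mul_lt_mul_of_pos_left hts (mul_pos hb hγ)
      rwa [← mul_assoc (b * γ) (1 / (b * γ)), mul_one_div_cancel (mul_pos hb hγ).ne', one_mul] at this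
    have h2 := (Real.lt_log_iff_exp_lt (by positivity)).mp h1
    have h3 : (c / b) * y 0 ^ γ * (Real.exp (b * γ * t) - 1)
        < (c / b) * y 0 ^ γ * (b / (c * y 0 ^ γ)) :=
      mul_lt_mul_of_pos_left (by linarith) (by positivity)
    have h4 : (c / b) * y 0 ^ γ * (b / (c * y 0 ^ γ)) = 1 := by
      field_simp
    linarith
  refine ⟨hQ, ?_⟩
  have hd : ∀ s ∈ Set.Ico (0 : ℝ) T,
      HasDerivWithinAt (fun s => Real.exp (b * γ * s) * (y s ^ (-γ) + c / b))
        (Real.exp (b * γ * s) * (b * γ) * (y s ^ (-γ) + c / b)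
          + Real.exp (b * γ * s) * (y' s * (-γ) * y s ^ (-γ - 1))) (Set.Ico (0 : ℝ) T) s := by
    intro s hs
    have e1 : HasDerivAt (fun s => Real.exp (b * γ * s)) (Real.exp (b * γ * s) * (b * γ)) s := by
      simpa using ((hasDerivAt_id s).const_mul (b * γ)).exp
    have e2 := ((hderiv s hs).rpow_const (p := -γ) (Or.inl (hpos s hs).ne')).add_const (c / b)
    exact e1.hasDerivWithinAt.mul e2
  have hmono : MonotoneOn (fun s => Real.exp (b * γ * s) * (y s ^ (-γ) + c / b))
      (Set.Ico (0 : ℝ) T) := by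
    refine monotoneOn_of_hasDerivWithinAt_nonneg (convex_Ico 0 T)
      (fun s hs => (hd s hs).continuousWithinAt)
      (fun s hs => (hd s (interior_subset hs)).mono interior_subset) ?_
    intro s hs
    have hs' := interior_subset hs
    have hys := hpos s hs'
    have a1 : y s ^ (1 + γ) * y s ^ (-γ - 1) = 1 := by
      rw [← Real.rpow_add hys]; ring_nf; exact Real.rpow_zero _
    have a2 : y s * y s ^ (-γ - 1) = y s ^ (-γ) := by
      rw [← Real.rpow_one_add' hys.le (by simpa using hγ.ne')]; ring_nf
    have a3 : y' s * y s ^ (-γ - 1) ≤ c + b * y s ^ (-γ) := by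
      have := mul_le_mul_of_nonneg_right (hineq s hs') (Real.rpow_pos_of_pos hys (-γ - 1)).le
      rw [add_mul, mul_assoc, mul_assoc, a1, a2] at this
      linarith
    have a4 : Real.exp (b * γ * s) * (b * γ) * (y s ^ (-γ) + c / b)
          + Real.exp (b * γ * s) * (y' s * (-γ) * y s ^ (-γ - 1))
        = Real.exp (b * γ * s) * γ * (c + b * y s ^ (-γ) - y' s * y s ^ (-γ - 1)) := by
      field_simp
      ring
    rw [a4]
    exact mul_nonneg (by positivity) (by linarith)
  have key := hmono h0 htI ht0
  simp only [mul_zero, Real.exp_zero, one_mul] at key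
  set Q := 1 - (c / b) * y 0 ^ γ * (Real.exp (b * γ * t) - 1) with hQdef
  have hinv : y 0 ^ (-γ) * y 0 ^ γ = 1 := by
    rw [← Real.rpow_add hy0]; simp
  have key2 : y 0 ^ (-γ) * Q ≤ Real.exp (b * γ * t) * y t ^ (-γ) := by
    have : y 0 ^ (-γ) * Q = y 0 ^ (-γ) - (c / b) * (y 0 ^ (-γ) * y 0 ^ γ) * (Real.exp (b * γ * t) - 1) := by
      rw [hQdef]; ring
    rw [this, hinv]
    linarith
  have hn0 := Real.rpow_pos_of_pos hy0 (-γ)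
  have key3 := Real.rpow_le_rpow_of_nonpos (mul_pos hn0 hQ) key2
    (show -(1 / γ) ≤ 0 by have : 0 < 1 / γ := by positivity
                          linarith)
  have hg : -γ * -(1 / γ) = 1 := by field_simp
  rw [Real.mul_rpow (Real.exp_pos _).le (Real.rpow_pos_of_pos hyt _).le,
    Real.mul_rpow hn0.le hQ.le, ← Real.rpow_mul hyt.le, ← Real.rpow_mul hy0.le, hg,
    Real.rpow_one, Real.rpow_one, ← Real.exp_mul,
    show b * γ * t * -(1 / γ) = -(b * t) by field_simp] at key3
  have := mul_le_mul_of_nonneg_left key3 (Real.exp_pos (b * t)).le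
  rw [← mul_assoc, ← Real.exp_add, add_neg_cancel, Real.exp_zero, one_mul, ← mul_assoc] at this
  exact this
end

section
/- Let s > 5/2, 0 < β ≤ 1/2, γ > 0 and c > 0. There exist constants c₁ > 0 and c₂ > 0 depending only on s and c such that the following holds. Suppose ζ : [0, T_ζ) → (0, ∞) is continuously differentiable, satisfies ζ'(t) = cγ·ζ(t)^(1+5/(2s)) + c·(βt)^(s−5/2)·ζ(t)² + c·(βt)²·γ²·ζ(t)^(1+5/s) + c·(βt)^(2s−3)·ζ(t)³ for all t ∈ [0, T_ζ), and T_ζ < ∞ is its maximal existence time, i.e. ζ(t) → ∞ as t → T_ζ from the left. Set Z = c₂ · min{γ^(5/(2s−5)), γ^(−1)} · ζ(0)^(−5/(2s)). If ζ(0) ≥ c₁ · β^(−4s/5) · min{γ^(2s/(2s−5)), γ^(−2s/5)}, then T_ζ > Z; if ζ(0) < c₁ · β^(−4s/5) · min{γ^(2s/(2s−5)), γ^(−2s/5)}, then T_ζ > min{Z, Z^(2/5)}. -/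
lemma aux_pow (Z T e q : ℝ) (hZ : 0 < Z) (hT : 0 < T) (h1 : T ≤ Z) (h2 : T ≤ Z ^ ((2:ℝ)/5))
    (he : 0 ≤ e) (hqe : q ≤ e) (heq : 2 / 5 * e ≤ q) : T ^ e ≤ Z ^ q := by
  rcases le_total Z 1 with h | h
  · calc T ^ e ≤ Z ^ e := Real.rpow_le_rpow hT.le h1 he
      _ ≤ Z ^ q := Real.rpow_le_rpow_of_exponent_ge hZ h hqe
  · calc T ^ e ≤ (Z ^ ((2:ℝ)/5)) ^ e := Real.rpow_le_rpow hT.le h2 he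
      _ = Z ^ (2 / 5 * e) := by rw [← Real.rpow_mul hZ.le]
      _ ≤ Z ^ q := Real.rpow_le_rpow_of_exponent_le h heq

/-- comparison with the affine barrier -/
lemma aux_barrier (y T Tζ : ℝ) (hy : 0 < y) (hT : 0 < T) (hle : Tζ ≤ T) (hTζ : 0 < Tζ)
    (ζ ζ' : ℝ → ℝ) (h0 : ζ 0 = y)
    (hd : ∀ t ∈ Set.Ico (0 : ℝ) Tζ, HasDerivWithinAt ζ (ζ' t) (Set.Ico (0 : ℝ) Tζ) t)
    (hb : ∀ t ∈ Set.Ico (0 : ℝ) Tζ, ζ t ≤ 2 * y → ζ' t < y / T)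
    (hlim : Filter.Tendsto ζ (nhdsWithin Tζ (Set.Iio Tζ)) Filter.atTop) : False := by
  have key : ∀ b ∈ Set.Ico (0 : ℝ) Tζ, ζ b ≤ 2 * y := by
    intro b hbm
    have hB : ∀ x, HasDerivAt (fun t => y + y / T * t) (y / T) x := by
      intro x
      simpa using ((hasDerivAt_id x).const_mul (y / T)).const_add y
    have hBle : ∀ x, x < Tζ → y + y / T * x ≤ 2 * y := by
      intro x hx
      have : y / T * x ≤ y / T * T := by
        apply mul_le_mul_of_nonneg_left (by linarith) (by positivity)
      rw [div_mul_cancel₀ _ hT.ne'] at this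
      linarith
    have := image_le_of_deriv_right_lt_deriv_boundary (f := ζ) (f' := ζ') (a := 0) (b := b)
      (B := fun t => y + y / T * t) (B' := fun _ => y / T)
      (fun t ht => ((hd t ⟨ht.1, ht.2.trans_lt hbm.2⟩).continuousWithinAt).mono
        (fun u hu => ⟨hu.1, hu.2.trans_lt hbm.2⟩))
      (fun t ht => by
        have h1 := hd t ⟨ht.1, ht.2.trans hbm.2⟩
        refine h1.mono_of_mem_nhdsWithin ?_
        have : Set.Ico t Tζ ∈ nhdsWithin t (Set.Ici t) := Ico_mem_nhdsGE (ht.2.trans hbm.2)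
        exact Filter.mem_of_superset this (fun u hu => ⟨ht.1.trans hu.1, hu.2⟩))
      (by simp [h0]) hB
      (fun t ht hc => hb t ⟨ht.1, ht.2.trans hbm.2⟩ (by
        rw [hc]; exact hBle t (ht.2.trans hbm.2)))
      (x := b) ⟨hbm.1, le_rfl⟩
    exact this.trans (hBle b hbm.2)
  have e1 := hlim.eventually (Filter.eventually_gt_atTop (2 * y))
  have e2 : ∀ᶠ t in nhdsWithin Tζ (Set.Iio Tζ), t ∈ Set.Ico (0:ℝ) Tζ := Ico_mem_nhdsLT hTζ
  obtain ⟨t, ht1, ht2⟩ := (e1.and e2).exists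
  exact absurd (key t ht2) (not_le.mpr ht1)

lemma aux_mu (s γ : ℝ) (hs : 5 / 2 < s) (hγ : 0 < γ) :
    0 < min (γ ^ (5 / (2 * s - 5))) (γ ^ (-1 : ℝ)) ∧
    min (γ ^ (5 / (2 * s - 5))) (γ ^ (-1 : ℝ)) ≤ 1 ∧
    γ * min (γ ^ (5 / (2 * s - 5))) (γ ^ (-1 : ℝ)) ≤ 1 := by
  have h5 : 0 < 2 * s - 5 := by linarith
  refine ⟨lt_min (by positivity) (by positivity), ?_, ?_⟩
  · rcases le_total γ 1 with h | h
    · exact (min_le_left _ _).trans (Real.rpow_le_one hγ.le h (by positivity))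
    · exact (min_le_right _ _).trans (Real.rpow_le_one_of_one_le_of_nonpos h (by norm_num))
  · calc _ ≤ γ * γ ^ (-1 : ℝ) := mul_le_mul_of_nonneg_left (min_le_right _ _) hγ.le
      _ = 1 := by rw [Real.rpow_neg_one]; exact mul_inv_cancel₀ hγ.ne'

set_option maxHeartbeats 2000000 in
lemma aux_bound (s c k β γ μ y Z T t x : ℝ) (hs : 5 / 2 < s) (hc : 0 < c) (hk : 0 < k)
    (hk1 : k ≤ 1) (hkc : 64 * c * k ≤ 1) (hβ : 0 < β) (hβ1 : β ≤ 1 / 2) (hγ : 0 < γ)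
    (hμ : 0 < μ) (hμ1 : μ ≤ 1) (hμγ : γ * μ ≤ 1) (hy : 0 < y)
    (hZ : Z = k * μ * y ^ (-(5 / (2 * s)))) (hT : 0 < T) (hTZ : T ≤ Z)
    (hTZ2 : T ≤ Z ^ ((2:ℝ)/5)) (ht : 0 ≤ t) (htT : t ≤ T) (hx : 0 < x) (hxy : x ≤ 2 * y) :
    c * γ * x ^ (1 + 5 / (2 * s)) + c * (β * t) ^ (s - 5 / 2) * x ^ 2
            + c * (β * t) ^ 2 * γ ^ 2 * x ^ (1 + 5 / s)
            + c * (β * t) ^ (2 * s - 3) * x ^ 3 < y / T := by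
  have hs0 : 0 < s := by linarith
  have hZ0 : 0 < Z := by linarith
  set p := 5 / (2 * s) with hp
  have hp0 : 0 < p := by positivity
  have hp1 : p ≤ 1 := by rw [hp, div_le_one (by positivity)]; linarith
  have hyp : 0 < y ^ p := by positivity
  have hZy : Z * y ^ p = k * μ := by
    rw [hZ, Real.rpow_neg hy.le, mul_assoc, inv_mul_cancel₀ hyp.ne', mul_one]
  -- bound on `y`
  have hyZ : Z ^ (2 * s / 5) * y ≤ k := by
    have : Z ^ (2 * s / 5) * y = (Z * y ^ p) ^ (2 * s / 5) := by
      rw [Real.mul_rpow hZ0.le hyp.le, ← Real.rpow_mul hy.le,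
        show p * (2 * s / 5) = 1 by rw [hp]; field_simp, Real.rpow_one]
    rw [this, hZy]
    have hkm : k * μ ≤ k := mul_le_of_le_one_right hk.le hμ1
    calc (k * μ) ^ (2 * s / 5) ≤ (k * μ) ^ (1:ℝ) :=
          Real.rpow_le_rpow_of_exponent_ge (by positivity) (hkm.trans hk1) (by linarith)
      _ ≤ k := by rw [Real.rpow_one]; exact hkm
  have hγZ : Z * (γ * y ^ p) ≤ k := by
    have : Z * (γ * y ^ p) = k * (γ * μ) := by linear_combination γ * hZy
    rw [this]; exact mul_le_of_le_one_right hk.le hμγ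
  have hT1 : T ^ (s - 3/2) ≤ Z ^ (2 * s / 5) :=
    aux_pow Z T _ _ hZ0 hT hTZ hTZ2 (by linarith) (by linarith) (by linarith)
  have hT2 : T ^ 3 ≤ Z ^ 2 := by
    have := aux_pow Z T 3 2 hZ0 hT hTZ hTZ2 (by norm_num) (by norm_num) (by norm_num)
    exact_mod_cast this
  have hT3 : T ^ (2 * s - 2) ≤ (Z ^ (2 * s / 5)) ^ 2 := by
    have := aux_pow Z T (2 * s - 2) (4 * s / 5) hZ0 hT hTZ hTZ2 (by linarith) (by linarith)
      (by linarith)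
    refine this.trans (le_of_eq ?_)
    rw [← Real.rpow_natCast, ← Real.rpow_mul hZ0.le]
    congr 1; push_cast; ring
  have hbt0 : 0 ≤ β * t := by positivity
  have hbt : β * t ≤ T := by nlinarith
  have hxp : x ^ p ≤ 2 * y ^ p := by
    calc x ^ p ≤ (2 * y) ^ p := Real.rpow_le_rpow hx.le hxy hp0.le
      _ = 2 ^ p * y ^ p := Real.mul_rpow (by norm_num) hy.le
      _ ≤ 2 ^ (1:ℝ) * y ^ p := by
        gcongr
        norm_num
      _ = _ := by rw [Real.rpow_one]
  have hxp0 : 0 < x ^ p := by positivity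
  -- four terms
  have b1 : T * (γ * x ^ (1 + p)) ≤ 4 * k * y := by
    rw [Real.rpow_add hx, Real.rpow_one]
    calc T * (γ * (x * x ^ p)) ≤ Z * (γ * ((2 * y) * (2 * y ^ p))) := by gcongr
      _ = 4 * y * (Z * (γ * y ^ p)) := by ring
      _ ≤ 4 * y * k := by gcongr
      _ = _ := by ring
  have b2 : T * ((β * t) ^ (s - 5 / 2) * x ^ 2) ≤ 4 * k * y := by
    have e : T * T ^ (s - 5/2) = T ^ (s - 3/2) := by
      rw [show s - 3/2 = 1 + (s - 5/2) by ring, Real.rpow_add hT, Real.rpow_one]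
    calc T * ((β * t) ^ (s - 5 / 2) * x ^ 2) ≤ T * (T ^ (s - 5 / 2) * (2 * y) ^ 2) := by
          gcongr
      _ = 4 * y * (T ^ (s - 3/2) * y) := by rw [← e]; ring
      _ ≤ 4 * y * (Z ^ (2 * s / 5) * y) := by gcongr
      _ ≤ 4 * y * k := by gcongr
      _ = _ := by ring
  have hk2 : k ^ 2 ≤ k := by nlinarith
  have b3 : T * ((β * t) ^ 2 * γ ^ 2 * x ^ (1 + 5 / s)) ≤ 8 * k * y := by
    rw [show 1 + 5 / s = 1 + p + p by rw [hp]; field_simp; ring, Real.rpow_add hx,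
      Real.rpow_add hx, Real.rpow_one]
    calc T * ((β * t) ^ 2 * γ ^ 2 * (x * x ^ p * x ^ p))
        ≤ T * (T ^ 2 * γ ^ 2 * ((2 * y) * (2 * y ^ p) * (2 * y ^ p))) := by gcongr
      _ = 8 * y * (T ^ 3 * (γ * y ^ p) ^ 2) := by ring
      _ ≤ 8 * y * (Z ^ 2 * (γ * y ^ p) ^ 2) := by gcongr
      _ = 8 * y * (Z * (γ * y ^ p)) ^ 2 := by ring
      _ ≤ 8 * y * k ^ 2 := by gcongr
      _ ≤ 8 * y * k := by gcongr
      _ = _ := by ring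
  have b4 : T * ((β * t) ^ (2 * s - 3) * x ^ 3) ≤ 8 * k * y := by
    have e : T * T ^ (2 * s - 3) = T ^ (2 * s - 2) := by
      rw [show 2 * s - 2 = 1 + (2 * s - 3) by ring, Real.rpow_add hT, Real.rpow_one]
    calc T * ((β * t) ^ (2 * s - 3) * x ^ 3) ≤ T * (T ^ (2 * s - 3) * (2 * y) ^ 3) := by
          gcongr
          linarith
      _ = 8 * y * (T ^ (2 * s - 2) * y ^ 2) := by rw [← e]; ring
      _ ≤ 8 * y * ((Z ^ (2 * s / 5)) ^ 2 * y ^ 2) := by gcongr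
      _ = 8 * y * (Z ^ (2 * s / 5) * y) ^ 2 := by ring
      _ ≤ 8 * y * k ^ 2 := by gcongr
      _ ≤ 8 * y * k := by gcongr
      _ = _ := by ring
  rw [lt_div_iff₀ hT]
  calc _ = c * (T * (γ * x ^ (1 + p)) + T * ((β * t) ^ (s - 5 / 2) * x ^ 2)
        + T * ((β * t) ^ 2 * γ ^ 2 * x ^ (1 + 5 / s))
        + T * ((β * t) ^ (2 * s - 3) * x ^ 3)) := by ring
    _ ≤ c * (24 * k * y) := by gcongr; linarith
    _ = 24 * (c * k) * y := by ring
    _ < y := by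
      have : 24 * (c * k) < 1 := by nlinarith
      nlinarith


/-- lower bound on the blow-up time of the non-autonomous ODE
`ζ' = cγ ζ^{1+5/(2s)} + c(βt)^{s−5/2} ζ² + c(βt)² γ² ζ^{1+5/s} + c(βt)^{2s−3} ζ³`
for `s > 5/2`, with constants `c₁, c₂` depending only on `s` and `c`. -/
theorem stmt14 (s c : ℝ) (hs : 5 / 2 < s) (hc : 0 < c) :
    ∃ c₁ : ℝ, 0 < c₁ ∧ ∃ c₂ : ℝ, 0 < c₂ ∧
      ∀ β γ Tζ : ℝ, 0 < β → β ≤ 1 / 2 → 0 < γ → 0 < Tζ →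
      ∀ ζ ζ' : ℝ → ℝ,
        (∀ t ∈ Set.Ico (0 : ℝ) Tζ, 0 < ζ t) →
        (∀ t ∈ Set.Ico (0 : ℝ) Tζ, HasDerivWithinAt ζ (ζ' t) (Set.Ico (0 : ℝ) Tζ) t) →
        (∀ t ∈ Set.Ico (0 : ℝ) Tζ, ContinuousWithinAt ζ' (Set.Ico (0 : ℝ) Tζ) t) →
        (∀ t ∈ Set.Ico (0 : ℝ) Tζ,
          ζ' t = c * γ * ζ t ^ (1 + 5 / (2 * s))
            + c * (β * t) ^ (s - 5 / 2) * ζ t ^ 2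
            + c * (β * t) ^ 2 * γ ^ 2 * ζ t ^ (1 + 5 / s)
            + c * (β * t) ^ (2 * s - 3) * ζ t ^ 3) →
        Filter.Tendsto ζ (nhdsWithin Tζ (Set.Iio Tζ)) Filter.atTop →
        ((c₁ * β ^ (-(4 * s / 5)) * min (γ ^ (2 * s / (2 * s - 5))) (γ ^ (-(2 * s) / 5))
            ≤ ζ 0 →
          c₂ * min (γ ^ (5 / (2 * s - 5))) (γ ^ (-1 : ℝ)) * ζ 0 ^ (-(5 / (2 * s))) < Tζ) ∧
         (ζ 0 <
            c₁ * β ^ (-(4 * s / 5)) * min (γ ^ (2 * s / (2 * s - 5))) (γ ^ (-(2 * s) / 5)) →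
          min (c₂ * min (γ ^ (5 / (2 * s - 5))) (γ ^ (-1 : ℝ)) * ζ 0 ^ (-(5 / (2 * s))))
              ((c₂ * min (γ ^ (5 / (2 * s - 5))) (γ ^ (-1 : ℝ)) * ζ 0 ^ (-(5 / (2 * s))))
                ^ ((2 : ℝ) / 5)) < Tζ)) := by
  obtain ⟨k, hk, hk1, hkc⟩ : ∃ k : ℝ, 0 < k ∧ k ≤ 1 ∧ 64 * c * k ≤ 1 := by
    refine ⟨min 1 (1 / (64 * c)), lt_min one_pos (by positivity), min_le_left _ _, ?_⟩
    calc 64 * c * min 1 (1 / (64 * c)) ≤ 64 * c * (1 / (64 * c)) := by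
          gcongr; exact min_le_right _ _
      _ = 1 := by field_simp
  refine ⟨1, one_pos, k, hk, ?_⟩
  intro β γ Tζ hβ hβ1 hγ hTζ ζ ζ' hpos hd _ hode hlim
  have hs0 : 0 < s := by linarith
  have h5 : 0 < 2 * s - 5 := by linarith
  have hy : 0 < ζ 0 := hpos 0 ⟨le_rfl, hTζ⟩
  obtain ⟨hμ, hμ1, hμγ⟩ := aux_mu s γ hs hγ
  have hμle : ∀ w : ℝ, 0 < w →
      min (γ ^ (2 * s / (2 * s - 5))) (γ ^ (-(2 * s) / 5)) ≤ w →
      min (γ ^ (5 / (2 * s - 5))) (γ ^ (-1 : ℝ)) ≤ w ^ (5 / (2 * s)) := by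
    intro w hw h
    rcases min_le_iff.mp h with h | h
    · refine (min_le_left _ _).trans ?_
      have := Real.rpow_le_rpow (by positivity) h (show 0 ≤ 5 / (2 * s) by positivity)
      rwa [← Real.rpow_mul hγ.le, show 2 * s / (2 * s - 5) * (5 / (2 * s)) = 5 / (2 * s - 5) by
        have := h5.ne'
        field_simp] at this
    · refine (min_le_right _ _).trans ?_
      have := Real.rpow_le_rpow (by positivity) h (show 0 ≤ 5 / (2 * s) by positivity)
      rwa [← Real.rpow_mul hγ.le, show -(2 * s) / 5 * (5 / (2 * s)) = -1 by
        field_simp] at this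
  generalize min (γ ^ (5 / (2 * s - 5))) (γ ^ (-1 : ℝ)) = μ at *
  obtain ⟨Z, hZ⟩ : ∃ Z, Z = k * μ * ζ 0 ^ (-(5 / (2 * s))) := ⟨_, rfl⟩
  rw [← hZ]
  have hZ0 : 0 < Z := by rw [hZ]; positivity
  have main : min Z (Z ^ ((2 : ℝ) / 5)) < Tζ := by
    by_contra! hcon
    have hT : 0 < min Z (Z ^ ((2 : ℝ) / 5)) := lt_min hZ0 (by positivity)
    refine aux_barrier (ζ 0) _ Tζ hy hT hcon hTζ ζ ζ' rfl hd ?_ hlim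
    intro t ht hle
    rw [hode t ht]
    exact aux_bound s c k β γ μ (ζ 0) Z _ t (ζ t) hs hc hk hk1 hkc hβ hβ1 hγ hμ hμ1 hμγ hy hZ hT
      (min_le_left _ _) (min_le_right _ _) ht.1 (ht.2.le.trans hcon) (hpos t ht) hle
  refine ⟨fun h => ?_, fun _ => main⟩
  have hβp : 1 ≤ β ^ (-(4 * s / 5)) :=
    Real.one_le_rpow_of_pos_of_le_one_of_nonpos hβ (by linarith)
      (by have : 0 < 4 * s / 5 := by positivity
          linarith)
  have hm0 : 0 < min (γ ^ (2 * s / (2 * s - 5))) (γ ^ (-(2 * s) / 5)) :=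
    lt_min (by positivity) (by positivity)
  have hw := hμle (ζ 0) hy ((le_mul_of_one_le_left hm0.le (by rwa [one_mul])).trans h)
  have hyp : 0 < ζ 0 ^ (5 / (2 * s)) := by positivity
  have hZ1 : Z ≤ 1 := by
    have : Z * ζ 0 ^ (5 / (2 * s)) = k * μ := by
      rw [hZ, Real.rpow_neg hy.le, mul_assoc, inv_mul_cancel₀ hyp.ne', mul_one]
    have h2 : Z * ζ 0 ^ (5 / (2 * s)) ≤ 1 * ζ 0 ^ (5 / (2 * s)) := by
      rw [this]; exact mul_le_mul hk1 hw hμ.le zero_le_one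
    exact le_of_mul_le_mul_right h2 hyp
  have : Z ≤ Z ^ ((2 : ℝ) / 5) := by
    calc Z = Z ^ (1:ℝ) := (Real.rpow_one Z).symm
      _ ≤ _ := Real.rpow_le_rpow_of_exponent_ge hZ0 hZ1 (by norm_num)
  rwa [min_eq_left this] at main
end

section
/- Let 1/2 < σ < 3/2, 0 < β ≤ 1/2 and c > 0. There exist constants c₁ > 0 and c₂ > 0 depending only on σ and c such that the following holds. Suppose X : [0, T_X) → (0, ∞) is continuously differentiable, satisfies X'(t) = c·X(t)^(1+4/(1+2σ)) + c·(βt)^(4/(2σ−1))·X(t)^(1+4/(2σ−1)) for all t ∈ [0, T_X), and T_X < ∞ is its maximal existence time, i.e. X(t) → ∞ as t → T_X from the left. Set Q = c₂ · X(0)^(−4/(1+2σ)). If X(0) ≥ c₁ · β^(−(2σ+1)/2), then T_X > Q; if X(0) < c₁ · β^(−(2σ+1)/2), then T_X > min{Q, Q^(1/2)}. -/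
theorem aux_bound_s15 (p q c x0 x r : ℝ) (hp : 0 < p) (hq : 0 < q) (hpq : p * q / 2 = q - p)
    (hc : 0 < c) (h0 : 0 < x0) (hx : 0 < x) (hx2 : x ≤ 2 * x0) (hr : 0 ≤ r)
    (hr1 : r * x0 ^ (p / 2) ≤ 1) :
    c * x ^ (1 + p) + c * r ^ q * x ^ (1 + q)
      ≤ c * ((2:ℝ) ^ (1 + p) + (2:ℝ) ^ (1 + q)) * x0 ^ (1 + p) := by
  have h1 : x ^ (1 + p) ≤ (2:ℝ) ^ (1 + p) * x0 ^ (1 + p) := by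
    rw [← Real.mul_rpow (by norm_num) h0.le]
    exact Real.rpow_le_rpow hx.le hx2 (by linarith)
  have h2 : x ^ (1 + q) ≤ (2:ℝ) ^ (1 + q) * x0 ^ (1 + q) := by
    rw [← Real.mul_rpow (by norm_num) h0.le]
    exact Real.rpow_le_rpow hx.le hx2 (by linarith)
  have h3 : r ^ q * x0 ^ (q - p) ≤ 1 := by
    have h : (r * x0 ^ (p / 2)) ^ q ≤ 1 := Real.rpow_le_one (by positivity) hr1 hq.le
    rw [Real.mul_rpow hr (by positivity), ← Real.rpow_mul h0.le] at h
    rwa [← hpq, show p * q / 2 = p / 2 * q by ring]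
  have h4 : x0 ^ (1 + q) = x0 ^ (1 + p) * x0 ^ (q - p) := by
    rw [← Real.rpow_add h0]; congr 1; ring
  have hrq : 0 ≤ r ^ q := Real.rpow_nonneg hr q
  have h5 : r ^ q * x ^ (1 + q) ≤ (2:ℝ) ^ (1 + q) * x0 ^ (1 + p) := by
    calc r ^ q * x ^ (1 + q) ≤ r ^ q * ((2:ℝ) ^ (1 + q) * x0 ^ (1 + q)) := by gcongr
      _ = ((2:ℝ) ^ (1 + q) * x0 ^ (1 + p)) * (r ^ q * x0 ^ (q - p)) := by rw [h4]; ring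
      _ ≤ ((2:ℝ) ^ (1 + q) * x0 ^ (1 + p)) * 1 := by gcongr
      _ = _ := by ring
  calc c * x ^ (1 + p) + c * r ^ q * x ^ (1 + q)
      = c * (x ^ (1 + p) + r ^ q * x ^ (1 + q)) := by ring
    _ ≤ c * ((2:ℝ) ^ (1 + p) * x0 ^ (1 + p) + (2:ℝ) ^ (1 + q) * x0 ^ (1 + p)) := by gcongr
    _ = _ := by ring

theorem aux_main (p q c β TX : ℝ) (hp : 0 < p) (hq : 0 < q) (hpq : p * q / 2 = q - p)
    (hc : 0 < c) (hβ : 0 < β) (hβ1 : β ≤ 1 / 2) (hT : 0 < TX) (X X' : ℝ → ℝ) (C c₂ : ℝ)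
    (hC : C = c * ((2:ℝ) ^ (1 + p) + (2:ℝ) ^ (1 + q))) (hc₂ : c₂ = 1 / (C + 1))
    (hpos : ∀ t ∈ Set.Ico (0 : ℝ) TX, 0 < X t)
    (hd : ∀ t ∈ Set.Ico (0 : ℝ) TX, HasDerivWithinAt X (X' t) (Set.Ico (0 : ℝ) TX) t)
    (hode : ∀ t ∈ Set.Ico (0 : ℝ) TX,
          X' t = c * X t ^ (1 + p) + c * (β * t) ^ q * X t ^ (1 + q))
    (hlim : Filter.Tendsto X (nhdsWithin TX (Set.Iio TX)) Filter.atTop) :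
    min (c₂ * X 0 ^ (-p)) ((c₂ * X 0 ^ (-p)) ^ ((1 : ℝ) / 2)) < TX := by
  by_contra hcon
  rw [not_lt, le_min_iff] at hcon
  obtain ⟨hQ, hQ2⟩ := hcon
  have h0 : 0 < X 0 := hpos 0 ⟨le_rfl, hT⟩
  have hCpos : 0 < C := by rw [hC]; positivity
  have hc₂pos : 0 < c₂ := by rw [hc₂]; positivity
  have hc₂le : c₂ ≤ 1 := by
    rw [hc₂, div_le_one (by linarith)]; linarith
  set M : ℝ := (C + 1) * X 0 ^ (1 + p) with hM
  have hMpos : 0 < M := by positivity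
  have hMT : M * TX ≤ X 0 := by
    calc M * TX ≤ M * (c₂ * X 0 ^ (-p)) := by gcongr
      _ = ((C + 1) * c₂) * (X 0 ^ (1 + p) * X 0 ^ (-p)) := by rw [hM]; ring
      _ = X 0 := by
        rw [← Real.rpow_add h0, hc₂, mul_one_div_cancel (by linarith)]
        simp
  have hTr : TX * X 0 ^ (p / 2) ≤ 1 := by
    calc TX * X 0 ^ (p / 2) ≤ (c₂ * X 0 ^ (-p)) ^ ((1 : ℝ) / 2) * X 0 ^ (p / 2) := by gcongr
      _ = c₂ ^ ((1 : ℝ) / 2) * (X 0 ^ (-p * (1 / 2)) * X 0 ^ (p / 2)) := by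
        rw [Real.mul_rpow hc₂pos.le (by positivity), ← Real.rpow_mul h0.le]; ring
      _ = c₂ ^ ((1 : ℝ) / 2) := by
        rw [← Real.rpow_add h0, show -p * (1 / 2) + p / 2 = 0 by ring]; simp
      _ ≤ 1 := Real.rpow_le_one hc₂pos.le hc₂le (by norm_num)
  have key : ∀ b ∈ Set.Ico (0:ℝ) TX, X b ≤ 2 * X 0 := by
    intro b hb
    have hsub : ∀ x, x ∈ Set.Icc 0 b → x ∈ Set.Ico (0:ℝ) TX := fun x hx =>
      ⟨hx.1, hx.2.trans_lt hb.2⟩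
    have hmain : X b ≤ X 0 + M * b := by
      refine image_le_of_deriv_right_lt_deriv_boundary' (f := X) (f' := X') (a := 0) (b := b)
        (B := fun t => X 0 + M * t) (B' := fun _ => M) ?_ ?_ ?_ ?_ ?_ ?_ ⟨hb.1, le_rfl⟩
      · intro x hx
        exact ((hd x (hsub x hx)).continuousWithinAt).mono hsub
      · intro x hx
        have hx' := hsub x ⟨hx.1, hx.2.le⟩
        refine (hd x hx').mono_of_mem_nhdsWithin ?_
        exact Filter.mem_of_superset (Ico_mem_nhdsGE hx'.2) (Set.Ico_subset_Ico_left hx.1)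
      · simp
      · fun_prop
      · intro x hx
        have := ((hasDerivAt_id x).const_mul M).const_add (X 0)
        simpa using this.hasDerivWithinAt
      · intro x hx hxe
        have hx' := hsub x ⟨hx.1, hx.2.le⟩
        have hle : X x ≤ 2 * X 0 := by
          have : M * x ≤ M * TX := by gcongr; exact hx'.2.le
          linarith
        have hr1 : (β * x) * X 0 ^ (p / 2) ≤ 1 := by
          calc (β * x) * X 0 ^ (p / 2) ≤ (1 * TX) * X 0 ^ (p / 2) := by
                gcongr
                · exact hx'.1
                · linarith
                · exact hx'.2.le
            _ ≤ 1 := by simpa using hTr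
        rw [hode x hx']
        refine (aux_bound_s15 p q c (X 0) (X x) (β * x) hp hq hpq hc h0 (hpos x hx') hle
          (mul_nonneg hβ.le hx'.1) hr1).trans_lt ?_
        rw [← hC]
        have : 0 < X 0 ^ (1 + p) := by positivity
        show C * X 0 ^ (1 + p) < M
        rw [hM]; linarith
    have : M * b ≤ M * TX := by gcongr; exact hb.2.le
    linarith
  have h1 := hlim.eventually (Filter.eventually_gt_atTop (2 * X 0))
  have h2 : ∀ᶠ t in nhdsWithin TX (Set.Iio TX), t ∈ Set.Ico 0 TX := Ico_mem_nhdsLT hT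
  obtain ⟨t, ht1, ht2⟩ := (h1.and h2).exists
  exact absurd (key t ht2) (not_le.mpr ht1)

/-- lower bound on the blow-up time of the non-autonomous ODE
`X' = c X^{1+4/(1+2σ)} + c (βt)^{4/(2σ−1)} X^{1+4/(2σ−1)}` for `1/2 < σ < 3/2`,
with constants `c₁, c₂` depending only on `σ` and `c`. -/
theorem stmt15 (σ c : ℝ) (hσ1 : 1 / 2 < σ) (hσ2 : σ < 3 / 2) (hc : 0 < c) :
    ∃ c₁ : ℝ, 0 < c₁ ∧ ∃ c₂ : ℝ, 0 < c₂ ∧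
      ∀ β TX : ℝ, 0 < β → β ≤ 1 / 2 → 0 < TX →
      ∀ X X' : ℝ → ℝ,
        (∀ t ∈ Set.Ico (0 : ℝ) TX, 0 < X t) →
        (∀ t ∈ Set.Ico (0 : ℝ) TX, HasDerivWithinAt X (X' t) (Set.Ico (0 : ℝ) TX) t) →
        (∀ t ∈ Set.Ico (0 : ℝ) TX, ContinuousWithinAt X' (Set.Ico (0 : ℝ) TX) t) →
        (∀ t ∈ Set.Ico (0 : ℝ) TX,
          X' t = c * X t ^ (1 + 4 / (1 + 2 * σ))
            + c * (β * t) ^ (4 / (2 * σ - 1)) * X t ^ (1 + 4 / (2 * σ - 1))) →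
        Filter.Tendsto X (nhdsWithin TX (Set.Iio TX)) Filter.atTop →
        ((c₁ * β ^ (-((2 * σ + 1) / 2)) ≤ X 0 →
            c₂ * X 0 ^ (-(4 / (1 + 2 * σ))) < TX) ∧
         (X 0 < c₁ * β ^ (-((2 * σ + 1) / 2)) →
            min (c₂ * X 0 ^ (-(4 / (1 + 2 * σ))))
              ((c₂ * X 0 ^ (-(4 / (1 + 2 * σ)))) ^ ((1 : ℝ) / 2)) < TX)) := by
  have hp : 0 < 4 / (1 + 2 * σ) := div_pos (by norm_num) (by linarith)
  have hq : 0 < 4 / (2 * σ - 1) := div_pos (by norm_num) (by linarith)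
  have hpq : 4 / (1 + 2 * σ) * (4 / (2 * σ - 1)) / 2 = 4 / (2 * σ - 1) - 4 / (1 + 2 * σ) := by
    have h1 : 1 + 2 * σ ≠ 0 := by linarith
    have h2 : 2 * σ - 1 ≠ 0 := by linarith
    field_simp
    ring
  refine ⟨1, one_pos, 1 / (c * ((2:ℝ) ^ (1 + 4 / (1 + 2 * σ)) + (2:ℝ) ^ (1 + 4 / (2 * σ - 1))) + 1),
    by positivity, ?_⟩
  intro β TX hβ hβ1 hT X X' hpos hd _ hode hlim
  have main := aux_main _ _ c β TX hp hq hpq hc hβ hβ1 hT X X' _ _ rfl rfl hpos hd hode hlim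
  refine ⟨fun h => ?_, fun _ => main⟩
  have hx1 : 1 ≤ X 0 := by
    rw [one_mul] at h
    exact (Real.one_le_rpow_of_pos_of_le_one_of_nonpos hβ (by linarith) (by linarith)).trans h
  set C := c * ((2:ℝ) ^ (1 + 4 / (1 + 2 * σ)) + (2:ℝ) ^ (1 + 4 / (2 * σ - 1))) with hC
  have hCpos : 0 < C := by positivity
  have hX0 : 0 < X 0 := by linarith
  set Q := 1 / (C + 1) * X 0 ^ (-(4 / (1 + 2 * σ))) with hQ
  have hQ0 : 0 < Q := by positivity
  have hQ1 : Q ≤ 1 := by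
    refine mul_le_one₀ ?_ (by positivity) (Real.rpow_le_one_of_one_le_of_nonpos hx1 (by linarith))
    rw [div_le_one (by linarith)]; linarith
  have hQle : Q ≤ Q ^ ((1:ℝ) / 2) := by
    have := Real.rpow_le_rpow_of_exponent_ge hQ0 hQ1 (show (1:ℝ) / 2 ≤ 1 by norm_num)
    rwa [Real.rpow_one] at this
  rwa [min_eq_left hQle] at main
end
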